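/- Assume Σ_{j∈ℤ} r(j)² < ∞. Set θ̂_n := Q_{f_q,n}(Z), θ* := λ_{f_q}(Z) and s_n := √(E[U_{f_q,n}(Z)²]) > 0. Let g : ℝ → ℝ be twice continuously differentiable with g'(θ*) ≠ 0, set θ := g(θ*), and suppose: (i) there is a function φ with d_W( √n (θ̂_n − θ*)/s_n , N ) ≤ φ(n) for all n ≥ 1; (ii) there exist p' > 1 and M > 0 such that E[ ( sup_{x ∈ [min(θ̂_n,θ*), max(θ̂_n,θ*)]} |g''(x)| )^{p'} ] ≤ M for all n ≥ 1. Then there is a constant C > 0 such that for all n ≥ 1: d_W( √n (g(θ̂_n) − θ)/(g'(θ*) s_n) , N ) ≤ C/√n + φ(n), where N is a standard Gaussian random variable. -/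

import Mathlib

open MeasureTheory ProbabilityTheory Filter
open scoped NNReal ENNReal

noncomputable section

variable {Ω : Type*} [MeasureSpace Ω]

/-- `Z` is a centered stationary Gaussian sequence with covariance `r`. -/
def IsCSG (Z : ℤ → Ω → ℝ) (r : ℤ → ℝ) : Prop :=
  (∀ k, Measurable (Z k)) ∧
  (∀ (s : Finset ℤ) (a : ℤ → ℝ), ∃ v : ℝ≥0,
    Measure.map (fun ω => ∑ k ∈ s, a k * Z k ω) (ℙ : Measure Ω) = gaussianReal 0 v) ∧
  (∀ j k : ℤ, ∫ ω, Z j ω * Z k ω = r (k - j)) ∧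
  0 < r 0

/-- `m`-th probabilists' Hermite polynomial, as a function on `ℝ`. -/
def hermiteFun (m : ℕ) (x : ℝ) : ℝ := Polynomial.aeval x (Polynomial.hermite m)

/-- The polynomial `f_q(x) = ∑_{k=0}^{q/2} d_{2k} He_{2k}(x/√r0)`. -/
def fpoly (r0 : ℝ) (d : ℕ → ℝ) (q : ℕ) (x : ℝ) : ℝ :=
  ∑ k ∈ Finset.range (q / 2 + 1), d (2 * k) * hermiteFun (2 * k) (x / Real.sqrt r0)

/-- Polynomial variation `Q_{f,n}(X)`. -/
def Qvar (f : ℝ → ℝ) (X : ℤ → Ω → ℝ) (n : ℕ) (ω : Ω) : ℝ :=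
  (1 / (n : ℝ)) * ∑ i ∈ Finset.range n, f (X (i : ℤ) ω)

/-- `λ_f(X) = E[f(X_0)]`. -/
def lamE (f : ℝ → ℝ) (X : ℤ → Ω → ℝ) : ℝ := ∫ ω, f (X 0 ω)

/-- `U_{f,n}(X) = √n (Q_{f,n}(X) − λ_f(X))`. -/
def Ustat (f : ℝ → ℝ) (X : ℤ → Ω → ℝ) (n : ℕ) (ω : Ω) : ℝ :=
  Real.sqrt n * (Qvar f X n ω - lamE f X)

/-- Variance of `U_{f,n}(X)`. -/
def varU (f : ℝ → ℝ) (X : ℤ → Ω → ℝ) (n : ℕ) : ℝ := ∫ ω, (Ustat f X n ω) ^ 2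

/-- Standardized statistic `F_{f,n}(X)`. -/
def Fstat (f : ℝ → ℝ) (X : ℤ → Ω → ℝ) (n : ℕ) (ω : Ω) : ℝ :=
  Ustat f X n ω / Real.sqrt (varU f X n)

/-- fourth cumulant `κ₄(X) = E[X⁴] − 3 (E[X²])²` of a centered random variable. -/
def kappa4 (X : Ω → ℝ) : ℝ := (∫ ω, X ω ^ 4) - 3 * (∫ ω, X ω ^ 2) ^ 2

/-- third cumulant `κ₃(X) = E[X³]`. -/
def kappa3 (X : Ω → ℝ) : ℝ := ∫ ω, X ω ^ 3

/-- `u_{f_q}(Z) = ∑_{k=1}^{q/2} d_{2k}² (2k)! ∑_{j∈ℤ} (r(j)/r(0))^{2k}`. -/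
def ufq (r : ℤ → ℝ) (d : ℕ → ℝ) (q : ℕ) : ℝ :=
  ∑ k ∈ Finset.Icc 1 (q / 2),
    (d (2 * k)) ^ 2 * (Nat.factorial (2 * k)) * ∑' j : ℤ, (r j / r 0) ^ (2 * k)

/-- Total variation distance between two laws on `ℝ`. -/
def dTV (μ ν : Measure ℝ) : ℝ :=
  ⨆ A : {A : Set ℝ // MeasurableSet A}, |(μ A.1).toReal - (ν A.1).toReal|

/-- Wasserstein distance between two laws on `ℝ`. -/
def dW (μ ν : Measure ℝ) : ℝ :=
  ⨆ f : {f : ℝ → ℝ // LipschitzWith 1 f}, |(∫ x, f.1 x ∂μ) - ∫ x, f.1 x ∂ν|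

/-- The quadratic function `f₂(x) = x²`. -/
def f2 : ℝ → ℝ := fun x => x ^ 2

/-- `U_{f₂,n}(X) = √n (Q_{f₂,n}(X) − r(0))`, quadratic case. -/
def U2 (X : ℤ → Ω → ℝ) (r0 : ℝ) (n : ℕ) (ω : Ω) : ℝ :=
  Real.sqrt n * (Qvar f2 X n ω - r0)

/-- Variance of `U_{f₂,n}`. -/
def varU2 (X : ℤ → Ω → ℝ) (r0 : ℝ) (n : ℕ) : ℝ := ∫ ω, (U2 X r0 n ω) ^ 2

/-- Standardized quadratic statistic `F_{f₂,n}`. -/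
def F2stat (X : ℤ → Ω → ℝ) (r0 : ℝ) (n : ℕ) (ω : Ω) : ℝ :=
  U2 X r0 n ω / Real.sqrt (varU2 X r0 n)

/-- `p`-th order finite difference of a sequence of processes. -/
def fdiff : ℕ → (ℤ → Ω → ℝ) → (ℤ → Ω → ℝ)
  | 0, Z => Z
  | (p + 1), Z => fun k ω => fdiff p Z (k + 1) ω - fdiff p Z k ω

/-- The standard Gaussian measure on `κ → ℝ`. -/
abbrev stdPi (κ : Type*) [Fintype κ] : Measure (κ → ℝ) :=
  Measure.pi (fun _ : κ => gaussianReal 0 1)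

lemma stdPi_map_linear {κ : Type*} [Fintype κ] (c : κ → ℝ) :
    (stdPi κ).map (fun ξ => ∑ j, c j * ξ j) = gaussianReal 0 (∑ j, c j ^ 2).toNNReal := by
  have h1 : (fun ξ : κ → ℝ => ∑ j, c j * ξ j)
      = (innerSL ℝ (WithLp.toLp 2 c : EuclideanSpace ℝ κ)) ∘ (WithLp.toLp 2) := by
    ext ξ
    simp [PiLp.inner_apply, mul_comm]
  rw [h1, ← Measure.map_map (by fun_prop) (by fun_prop), map_pi_eq_stdGaussian,
    IsGaussian.map_eq_gaussianReal, integral_strongDual_stdGaussian, variance_dual_stdGaussian]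
  simp [EuclideanSpace.real_norm_sq_eq]

lemma integral_sq_gaussianReal (v : ℝ≥0) : ∫ x, x ^ 2 ∂(gaussianReal 0 v) = v := by
  have h := variance_id_gaussianReal (μ := 0) (v := v)
  rw [variance_eq_integral (by fun_prop)] at h
  simpa using h

lemma law_linear_comb {Z : ℤ → Ω → ℝ} {r : ℤ → ℝ} (hZ : IsCSG Z r) {ι : Type*} [Fintype ι]
    (k : ι → ℤ) (a : ι → ℝ) : ∃ v : ℝ≥0,
    Measure.map (fun ω => ∑ i, a i * Z (k i) ω) (ℙ : Measure Ω) = gaussianReal 0 v := by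
  classical
  obtain ⟨v, hv⟩ := hZ.2.1 (Finset.univ.image k) (fun m => ∑ i with k i = m, a i)
  refine ⟨v, ?_⟩
  rw [← hv]
  congr 1
  ext ω
  rw [← Finset.sum_fiberwise_of_maps_to (s := Finset.univ) (t := Finset.univ.image k) (g := k)
    (fun i _ => Finset.mem_image_of_mem k (Finset.mem_univ i))]
  refine Finset.sum_congr rfl fun m _ => ?_
  rw [Finset.sum_mul]
  refine Finset.sum_congr rfl fun i hi => ?_
  rw [(Finset.mem_filter.1 hi).2]

lemma csg_map_single {Z : ℤ → Ω → ℝ} {r : ℤ → ℝ} (hZ : IsCSG Z r) (k : ℤ) :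
    Measure.map (Z k) (ℙ : Measure Ω) = gaussianReal 0 (r 0).toNNReal := by
  obtain ⟨v, hv⟩ := hZ.2.1 {k} (fun _ => 1)
  simp only [Finset.sum_singleton, one_mul] at hv
  rw [show (fun ω => Z k ω) = Z k from rfl] at hv
  have h2 := hZ.2.2.1 k k
  have h3 := integral_sq_gaussianReal v
  rw [← hv, integral_map (hZ.1 k).aemeasurable (by fun_prop)] at h3
  simp only [← pow_two, sub_self] at h2
  rw [h2] at h3
  rw [hv, h3, Real.toNNReal_coe]

lemma csg_memLp {Z : ℤ → Ω → ℝ} {r : ℤ → ℝ} (hZ : IsCSG Z r) (k : ℤ) (p : ℝ≥0∞) (hp : p ≠ ∞) :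
    MemLp (Z k) p (ℙ : Measure Ω) := by
  have h := memLp_id_gaussianReal' (μ := 0) (v := (r 0).toNNReal) p hp
  rw [← csg_map_single hZ k] at h
  exact (memLp_map_measure_iff (by fun_prop) (hZ.1 k).aemeasurable).1 h

lemma csg_integrable_mul {Z : ℤ → Ω → ℝ} {r : ℤ → ℝ} (hZ : IsCSG Z r) (j k : ℤ) :
    Integrable (fun ω => Z j ω * Z k ω) (ℙ : Measure Ω) :=
  (csg_memLp hZ j 2 (by simp)).integrable_mul (csg_memLp hZ k 2 (by simp))

lemma csg_integral_sq {Z : ℤ → Ω → ℝ} {r : ℤ → ℝ} (hZ : IsCSG Z r) {ι : Type*} [Fintype ι]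
    (k : ι → ℤ) (a : ι → ℝ) :
    ∫ ω, (∑ i, a i * Z (k i) ω) ^ 2 = ∑ i, ∑ j, a i * a j * r (k j - k i) := by
  have h1 : ∀ ω, (∑ i, a i * Z (k i) ω) ^ 2
      = ∑ i, ∑ j, a i * a j * (Z (k i) ω * Z (k j) ω) := by
    intro ω
    rw [pow_two, Finset.sum_mul_sum]
    exact Finset.sum_congr rfl fun i _ => Finset.sum_congr rfl fun j _ => by ring
  simp_rw [h1]
  rw [integral_finsetSum _ fun i _ => integrable_finsetSum _ fun j _ =>
    (csg_integrable_mul hZ _ _).const_mul _]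
  refine Finset.sum_congr rfl fun i _ => ?_
  rw [integral_finsetSum _ fun j _ => (csg_integrable_mul hZ _ _).const_mul _]
  refine Finset.sum_congr rfl fun j _ => ?_
  rw [integral_const_mul, hZ.2.2.1]

lemma csg_map_linear {Z : ℤ → Ω → ℝ} {r : ℤ → ℝ} (hZ : IsCSG Z r) {ι : Type*} [Fintype ι]
    (k : ι → ℤ) (a : ι → ℝ) :
    Measure.map (fun ω => ∑ i, a i * Z (k i) ω) (ℙ : Measure Ω)
      = gaussianReal 0 (∑ i, ∑ j, a i * a j * r (k j - k i)).toNNReal := by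
  obtain ⟨v, hv⟩ := law_linear_comb hZ k a
  have hm : Measurable (fun ω => ∑ i, a i * Z (k i) ω) :=
    Finset.measurable_sum _ fun i _ => (hZ.1 _).const_mul _
  have h3 := integral_sq_gaussianReal v
  rw [← hv, integral_map hm.aemeasurable (by fun_prop), csg_integral_sq hZ] at h3
  rw [hv, h3, Real.toNNReal_coe]

lemma csg_quadratic_nonneg {Z : ℤ → Ω → ℝ} {r : ℤ → ℝ} (hZ : IsCSG Z r) {ι : Type*} [Fintype ι]
    (k : ι → ℤ) (a : ι → ℝ) : 0 ≤ ∑ i, ∑ j, a i * a j * r (k j - k i) := by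
  rw [← csg_integral_sq hZ]
  exact integral_nonneg fun ω => sq_nonneg _

lemma csg_neg {Z : ℤ → Ω → ℝ} {r : ℤ → ℝ} (hZ : IsCSG Z r) (m : ℤ) : r (-m) = r m := by
  have h1 := hZ.2.2.1 m 0
  have h2 := hZ.2.2.1 0 m
  simp only [zero_sub, sub_zero] at h1 h2
  rw [← h1, ← h2]
  exact integral_congr_ae (ae_of_all _ fun ω => mul_comm _ _)

lemma continuousLinearMap_pi_apply {ι : Type*} [Fintype ι] (L : (ι → ℝ) →L[ℝ] ℝ) :
    ∃ a : ι → ℝ, ∀ x, L x = ∑ i, a i * x i := by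
  classical
  refine ⟨fun i => L (Pi.single i 1), fun x => ?_⟩
  have := LinearMap.pi_apply_eq_sum_univ L.toLinearMap x
  simp only [ContinuousLinearMap.coe_coe, smul_eq_mul] at this
  rw [this]
  refine Finset.sum_congr rfl fun i _ => ?_
  rw [mul_comm]
  congr 2
  ext j
  simp [Pi.single_apply, eq_comm]

/-- The law of a finite family extracted from `Z` is the image of a standard Gaussian vector
by any factor of its covariance matrix. -/
lemma csg_map_eq {Z : ℤ → Ω → ℝ} {r : ℤ → ℝ} [IsProbabilityMeasure (ℙ : Measure Ω)]
    (hZ : IsCSG Z r) {ι κ : Type*} [Fintype ι]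
    [Fintype κ] (k : ι → ℤ) (B : ι → κ → ℝ)
    (hB : ∀ i i', ∑ j, B i j * B i' j = r (k i' - k i)) :
    Measure.map (fun ω i => Z (k i) ω) (ℙ : Measure Ω)
      = (stdPi κ).map (fun ξ i => ∑ j, B i j * ξ j) := by
  have hm : Measurable (fun ω i => Z (k i) ω) := measurable_pi_lambda _ fun i => hZ.1 _
  have hm' : Measurable (fun (ξ : κ → ℝ) i => ∑ j, B i j * ξ j) := by fun_prop
  have : IsProbabilityMeasure (Measure.map (fun ω i => Z (k i) ω) (ℙ : Measure Ω)) :=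
    Measure.isProbabilityMeasure_map hm.aemeasurable
  have : IsProbabilityMeasure ((stdPi κ).map (fun ξ i => ∑ j, B i j * ξ j)) :=
    Measure.isProbabilityMeasure_map hm'.aemeasurable
  refine Measure.ext_of_charFunDual (funext fun L => ?_)
  obtain ⟨a, ha⟩ := continuousLinearMap_pi_apply L
  have key : (Measure.map (fun ω i => Z (k i) ω) (ℙ : Measure Ω)).map L
      = ((stdPi κ).map (fun ξ i => ∑ j, B i j * ξ j)).map L := by
    rw [Measure.map_map (by fun_prop) hm, Measure.map_map (by fun_prop) hm']
    have e1 : (L ∘ fun ω i => Z (k i) ω) = fun ω => ∑ i, a i * Z (k i) ω := by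
      ext ω; simp [ha]
    have e2 : (L ∘ fun (ξ : κ → ℝ) i => ∑ j, B i j * ξ j)
        = fun ξ => ∑ j, (∑ i, a i * B i j) * ξ j := by
      ext ξ
      simp only [Function.comp_apply, ha, Finset.mul_sum, Finset.sum_mul]
      rw [Finset.sum_comm]
      simp only [mul_assoc]
    rw [e1, e2, csg_map_linear hZ, stdPi_map_linear]
    congr 2
    simp_rw [← hB, pow_two, Finset.sum_mul_sum, Finset.mul_sum]
    rw [eq_comm, Finset.sum_comm]
    refine Finset.sum_congr rfl fun i _ => ?_
    rw [Finset.sum_comm]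
    exact Finset.sum_congr rfl fun i' _ => Finset.sum_congr rfl fun j _ => by ring
  rw [charFunDual_eq_charFun_map_one, charFunDual_eq_charFun_map_one, key]

/-- The law of `(Z_0, …, Z_{n-1})`. -/
def vecLaw (Z : ℤ → Ω → ℝ) (n : ℕ) : Measure (Fin n → ℝ) :=
  Measure.map (fun ω (i : Fin n) => Z (i : ℤ) ω) (ℙ : Measure Ω)

lemma exists_vecLaw_eq {Z : ℤ → Ω → ℝ} {r : ℤ → ℝ} [IsProbabilityMeasure (ℙ : Measure Ω)]
    (hZ : IsCSG Z r) (n : ℕ) : ∃ B : Fin n → Fin n → ℝ,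
    vecLaw Z n = (stdPi (Fin n)).map (fun ξ i => ∑ j, B i j * ξ j) := by
  classical
  let T : Matrix (Fin n) (Fin n) ℝ := Matrix.of fun i j => r ((j : ℤ) - (i : ℤ))
  have hT : T.PosSemidef := by
    refine Matrix.PosSemidef.of_dotProduct_mulVec_nonneg ?_ fun x => ?_
    · refine Matrix.ext fun i j => ?_
      rw [Matrix.conjTranspose_apply]
      simp only [T, Matrix.of_apply, star_trivial]
      rw [← csg_neg hZ]
      ring_nf
    · refine (csg_quadratic_nonneg hZ (fun i : Fin n => (i : ℤ)) x).trans_eq ?_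
      simp only [dotProduct, Matrix.mulVec, T, Finset.mul_sum, Matrix.of_apply, Pi.star_apply,
        star_trivial]
      exact Finset.sum_congr rfl fun i _ => Finset.sum_congr rfl fun j _ => by ring
  open scoped MatrixOrder in
  have h1 : CFC.sqrt T * CFC.sqrt T = T := CFC.sqrt_mul_sqrt_self T hT.nonneg
  open scoped MatrixOrder in
  have h2 : (CFC.sqrt T).IsHermitian := (Matrix.nonneg_iff_posSemidef.1 (CFC.sqrt_nonneg T)).1
  refine ⟨fun i j => CFC.sqrt T i j, csg_map_eq hZ _ _ fun i i' => ?_⟩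
  have := congrFun (congrFun h1 i) i'
  rw [Matrix.mul_apply] at this
  refine Eq.trans ?_ this
  refine Finset.sum_congr rfl fun j _ => ?_
  rw [← h2.apply i' j, star_trivial]

/-- The even polynomial `∑_{k ≤ p} c_k x^{2k}`. -/
def evenPoly (c : ℕ → ℝ) (p : ℕ) (x : ℝ) : ℝ := ∑ k ∈ Finset.range (p + 1), c k * x ^ (2 * k)

lemma evenPoly_neg (c : ℕ → ℝ) (p : ℕ) (x : ℝ) : evenPoly c p (-x) = evenPoly c p x := by
  simp [evenPoly, pow_mul]

lemma continuous_evenPoly (c : ℕ → ℝ) (p : ℕ) : Continuous (evenPoly c p) := by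
  unfold evenPoly
  fun_prop

/-- The coefficients of the derivative of `∑ c_k x^{2k}`, multiplied by `x`. -/
lemma exists_deriv_evenPoly (c : ℕ → ℝ) (p : ℕ) (x : ℝ) :
    ∃ y, HasDerivAt (evenPoly c p) y x ∧ x * y = evenPoly (fun k => 2 * k * c k) p x := by
  refine ⟨∑ k ∈ Finset.range (p + 1), c k * (((2 * k : ℕ) : ℝ) * x ^ (2 * k - 1)),
    HasDerivAt.fun_sum fun k _ => (hasDerivAt_pow (2 * k) x).const_mul (c k), ?_⟩
  rw [evenPoly, Finset.mul_sum]
  refine Finset.sum_congr rfl fun k _ => ?_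
  rcases Nat.eq_zero_or_pos k with rfl | hk
  · simp
  · have : x ^ (2 * k) = x ^ (2 * k - 1) * x := by rw [← pow_succ]; congr 1; omega
    rw [this]
    push_cast
    ring

lemma pow_even_le_one_add (x : ℝ) {k p : ℕ} (hk : k ≤ p) : x ^ (2 * k) ≤ 1 + x ^ (2 * p) := by
  rw [pow_mul, pow_mul]
  rcases le_total (x ^ 2) 1 with h | h
  · have h1 := pow_le_one₀ (n := k) (sq_nonneg x) h
    have h2 := pow_nonneg (sq_nonneg x) p
    linarith
  · have := pow_le_pow_right₀ h hk
    linarith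

lemma exists_abs_evenPoly_le (c : ℕ → ℝ) (p : ℕ) :
    ∃ C > 0, ∀ x, |evenPoly c p x| ≤ C * (1 + x ^ (2 * p)) := by
  refine ⟨∑ k ∈ Finset.range (p + 1), |c k| + 1, by positivity, fun x => ?_⟩
  have hx : 0 ≤ x ^ (2 * p) := by rw [pow_mul]; positivity
  calc |evenPoly c p x| ≤ ∑ k ∈ Finset.range (p + 1), |c k * x ^ (2 * k)| :=
        Finset.abs_sum_le_sum_abs _ _
    _ ≤ ∑ k ∈ Finset.range (p + 1), |c k| * (1 + x ^ (2 * p)) := by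
        refine Finset.sum_le_sum fun k hk => ?_
        have hk0 : 0 ≤ x ^ (2 * k) := by rw [pow_mul]; positivity
        rw [abs_mul, abs_of_nonneg hk0]
        exact mul_le_mul_of_nonneg_left
          (pow_even_le_one_add x (by simpa [Nat.lt_succ_iff] using hk)) (abs_nonneg _)
    _ ≤ _ := by
        rw [← Finset.sum_mul, add_mul]
        linarith

lemma exists_le_evenPoly {c : ℕ → ℝ} {p : ℕ} (hc : 0 < c p) :
    ∃ C > 0, ∀ x, c p / 2 * x ^ (2 * p) - C ≤ evenPoly c p x := by
  have key : ∀ k < p, ∀ e > 0, ∃ C ≥ 0, ∀ x : ℝ, x ^ (2 * k) ≤ e * x ^ (2 * p) + C := by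
    intro k hk e he
    refine ⟨(1 + 1 / e) ^ k, by positivity, fun x => ?_⟩
    rw [pow_mul, pow_mul]
    set y := x ^ 2
    have hy : 0 ≤ y := sq_nonneg x
    rcases le_total y (1 + 1 / e) with h | h
    · have := pow_le_pow_left₀ hy h k
      have : 0 ≤ e * y ^ p := by positivity
      linarith
    · have h1 : 1 ≤ y := le_trans (by simp; positivity) h
      have h2 : 1 ≤ e * y := by
        have : 1 / e ≤ y := by linarith
        rwa [div_le_iff₀ he, mul_comm] at this
      have h3 : y ^ k ≤ y ^ (p - 1) := pow_le_pow_right₀ h1 (by omega)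
      have h4 : y ^ p = y * y ^ (p - 1) := by rw [← pow_succ']; congr 1; omega
      have h5 : y ^ (p - 1) ≤ e * y ^ p := by
        rw [h4, ← mul_assoc]
        exact le_mul_of_one_le_left (by positivity) h2
      have : 0 ≤ (1 + 1 / e) ^ k := by positivity
      linarith
  have key2 : ∀ k : ℕ, ∃ C ≥ 0, k < p → ∀ x : ℝ,
      -(c p / 2 / p * x ^ (2 * p)) - C ≤ c k * x ^ (2 * k) := by
    intro k
    by_cases hk : k < p
    · have hp : (0 : ℝ) < p := by exact_mod_cast (Nat.zero_le k).trans_lt hk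
      obtain ⟨C, hC, h⟩ := key k hk (c p / 2 / p / (|c k| + 1)) (by positivity)
      refine ⟨(|c k| + 1) * C, by positivity, fun _ x => ?_⟩
      have hk0 : 0 ≤ x ^ (2 * k) := by rw [pow_mul]; positivity
      have h1 := mul_le_mul_of_nonneg_left (h x) (by positivity : 0 ≤ |c k| + 1)
      have h2 : (|c k| + 1) * (c p / 2 / p / (|c k| + 1) * x ^ (2 * p) + C)
          = c p / 2 / p * x ^ (2 * p) + (|c k| + 1) * C := by
        field_simp
      have h3 := mul_le_mul_of_nonneg_right (neg_abs_le (c k)) hk0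
      nlinarith
    · exact ⟨0, le_rfl, fun h => absurd h hk⟩
  choose D hD0 hD using key2
  refine ⟨∑ k ∈ Finset.range p, D k + 1,
    add_pos_of_nonneg_of_pos (Finset.sum_nonneg fun k _ => hD0 k) one_pos, fun x => ?_⟩
  rw [evenPoly, Finset.sum_range_succ]
  have h1 : ∑ k ∈ Finset.range p, (-(c p / 2 / p * x ^ (2 * p)) - D k)
      ≤ ∑ k ∈ Finset.range p, c k * x ^ (2 * k) :=
    Finset.sum_le_sum fun k hk => hD k (Finset.mem_range.1 hk) x
  rw [Finset.sum_sub_distrib, Finset.sum_const, Finset.card_range, nsmul_eq_mul] at h1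
  have hx : 0 ≤ x ^ (2 * p) := by rw [pow_mul]; positivity
  have h2 : (p : ℝ) * -(c p / 2 / p * x ^ (2 * p)) ≥ - (c p / 2 * x ^ (2 * p)) := by
    rcases Nat.eq_zero_or_pos p with rfl | hp
    · simp; positivity
    · have hp : (0 : ℝ) < p := by exact_mod_cast hp
      apply le_of_eq
      field_simp
  linarith

lemma hermiteFun_even (m : ℕ) : ∃ b : ℕ → ℝ, b m = 1 ∧
    ∀ x, hermiteFun (2 * m) x = evenPoly b m x := by
  refine ⟨fun k => ((Polynomial.hermite (2 * m)).coeff (2 * k) : ℝ), ?_, fun x => ?_⟩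
  · simp [Polynomial.coeff_hermite_self]
  · rw [hermiteFun, Polynomial.aeval_eq_sum_range, Polynomial.natDegree_hermite, evenPoly]
    have himg : ∑ k ∈ Finset.range (m + 1),
          ((Polynomial.hermite (2 * m)).coeff (2 * k) : ℝ) * x ^ (2 * k)
        = ∑ i ∈ (Finset.range (m + 1)).image (2 * ·),
          (Polynomial.hermite (2 * m)).coeff i • x ^ i := by
      rw [Finset.sum_image (by intro a _ b _ h; simpa using h)]
      simp
    rw [himg]
    symm
    refine Finset.sum_subset ?_ ?_
    · intro i hi
      simp only [Finset.mem_image, Finset.mem_range] at hi ⊢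
      omega
    · intro i hi hni
      simp only [Finset.mem_image, Finset.mem_range, not_exists, not_and] at hi hni
      rw [Polynomial.coeff_hermite_of_odd_add, zero_smul]
      rcases Nat.even_or_odd' i with ⟨j, rfl | rfl⟩
      · exact absurd rfl (hni j (by omega))
      · exact ⟨m + j, by ring⟩

lemma fpoly_eq_evenPoly {r0 : ℝ} (hr : 0 < r0) {d : ℕ → ℝ} {p : ℕ}
    (hd : d (2 * p) = r0 ^ p) :
    ∃ c : ℕ → ℝ, c p = 1 ∧ ∀ x, fpoly r0 d (2 * p) x = evenPoly c p x := by
  choose b hb1 hb using hermiteFun_even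
  refine ⟨fun k => (∑ m ∈ Finset.range (p + 1), if k ≤ m then d (2 * m) * b m k else 0)
    * (1 / r0) ^ k, ?_, fun x => ?_⟩
  · beta_reduce
    rw [Finset.sum_eq_single p]
    · simp only [le_refl, if_true, hd, hb1, one_div, inv_pow, mul_one]
      exact mul_inv_cancel₀ (by positivity)
    · intro m hm hne
      rw [if_neg]
      have := Finset.mem_range.1 hm
      omega
    · simp
  · have hxs : ∀ k : ℕ, (x / Real.sqrt r0) ^ (2 * k) = (1 / r0) ^ k * x ^ (2 * k) := by
      intro k
      rw [div_pow, pow_mul, pow_mul, Real.sq_sqrt hr.le, one_div, inv_pow]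
      ring
    simp only [fpoly, hb, evenPoly, Nat.mul_div_cancel_left p (by norm_num : 0 < 2), hxs]
    simp_rw [Finset.sum_mul]
    rw [Finset.sum_comm]
    refine Finset.sum_congr rfl fun m hm => ?_
    rw [Finset.mul_sum]
    have hm' := Finset.mem_range.1 hm
    rw [← Finset.sum_subset (Finset.range_subset_range.2 (by omega : m + 1 ≤ p + 1))]
    · refine Finset.sum_congr rfl fun k hk => ?_
      rw [if_pos (by have := Finset.mem_range.1 hk; omega)]
      ring
    · intro k _ hk
      rw [if_neg (by have := mt Finset.mem_range.2 hk; omega)]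
      ring

lemma abs_second_difference_pow_le {a b M : ℝ} (hM : |a| + |b| ≤ M) (hM1 : 1 ≤ M) (m : ℕ) :
    |(b + a) ^ m - (b - a) ^ m| ≤ 2 * m * |a| * M ^ m ∧
      |(b + a) ^ m + (b - a) ^ m - 2 * b ^ m| ≤ 2 * m ^ 2 * a ^ 2 * M ^ m := by
  have hM0 : 0 ≤ M := by linarith
  have ha := abs_nonneg a
  have hb := abs_nonneg b
  induction m with
  | zero => norm_num
  | succ m ih =>
    obtain ⟨ih1, ih2⟩ := ih
    have hp : 0 ≤ M ^ m := by positivity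
    have hsum : |(b + a) ^ m + (b - a) ^ m| ≤ 2 * M ^ m := by
      refine (abs_add_le _ _).trans ?_
      rw [abs_pow, abs_pow]
      have h1 : |b + a| ^ m ≤ M ^ m :=
        pow_le_pow_left₀ (abs_nonneg _) ((abs_add_le b a).trans (by linarith)) m
      have h2 : |b - a| ^ m ≤ M ^ m :=
        pow_le_pow_left₀ (abs_nonneg _) ((abs_sub b a).trans (by linarith)) m
      linarith
    have hbM : |b| ≤ M := by linarith
    have hMM : M ^ m ≤ M ^ (m + 1) := pow_le_pow_right₀ hM1 (Nat.le_succ m)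
    push_cast
    constructor
    · have e : (b + a) ^ (m + 1) - (b - a) ^ (m + 1)
          = b * ((b + a) ^ m - (b - a) ^ m) + a * ((b + a) ^ m + (b - a) ^ m) := by ring
      rw [e]
      calc _ ≤ |b| * |(b + a) ^ m - (b - a) ^ m| + |a| * |(b + a) ^ m + (b - a) ^ m| := by
            rw [← abs_mul, ← abs_mul]; exact abs_add_le _ _
        _ ≤ M * (2 * m * |a| * M ^ m) + |a| * (2 * M ^ (m + 1)) := by
            gcongr
            exact hsum.trans (by linarith)
        _ = _ := by ring
    · have e : (b + a) ^ (m + 1) + (b - a) ^ (m + 1) - 2 * b ^ (m + 1)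
          = b * ((b + a) ^ m + (b - a) ^ m - 2 * b ^ m) + a * ((b + a) ^ m - (b - a) ^ m) := by
        ring
      rw [e]
      calc _ ≤ |b| * |(b + a) ^ m + (b - a) ^ m - 2 * b ^ m|
            + |a| * |(b + a) ^ m - (b - a) ^ m| := by
            rw [← abs_mul, ← abs_mul]; exact abs_add_le _ _
        _ ≤ M * (2 * m ^ 2 * a ^ 2 * M ^ m) + |a| * (2 * m * |a| * M ^ (m + 1)) := by
            gcongr
            exact ih1.trans (by gcongr)
        _ = 2 * (m ^ 2 + m) * a ^ 2 * M ^ (m + 1) := by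
            rw [← sq_abs a]; ring
        _ ≤ _ := by
            gcongr
            nlinarith [(Nat.cast_nonneg m : (0 : ℝ) ≤ m)]

lemma integrable_one_add_sq_pow (v : ℝ≥0) (N : ℕ) :
    Integrable (fun x : ℝ => (1 + x ^ 2) ^ N) (gaussianReal 0 v) := by
  have h := (memLp_id_gaussianReal' (μ := 0) (v := v) ((2 * N : ℕ) : ℝ≥0∞)
    (ENNReal.natCast_ne_top _)).integrable_norm_pow'
  refine ((integrable_const (2 ^ N : ℝ)).add (h.const_mul (2 ^ N))).mono' (by fun_prop)
    (ae_of_all _ fun x => ?_)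
  simp only [id, Pi.add_apply, Real.norm_eq_abs, (even_two_mul N).pow_abs]
  rw [abs_of_nonneg (by positivity), pow_mul]
  rcases le_total (x ^ 2) 1 with hx | hx
  · have : (1 + x ^ 2) ^ N ≤ 2 ^ N := pow_le_pow_left₀ (by positivity) (by linarith) N
    have : 0 ≤ 2 ^ N * (x ^ 2) ^ N := by positivity
    linarith
  · have : (1 + x ^ 2) ^ N ≤ (2 * x ^ 2) ^ N := pow_le_pow_left₀ (by positivity) (by linarith) N
    rw [mul_pow] at this
    have : (0 : ℝ) ≤ 2 ^ N := by positivity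
    linarith

lemma stdPi_three : stdPi (Fin 3)
    = ((gaussianReal 0 1).prod ((gaussianReal 0 1).prod (gaussianReal 0 1))).map
      (fun x : ℝ × ℝ × ℝ => ![x.1, x.2.1, x.2.2]) := by
  have hm : Measurable (fun x : ℝ × ℝ × ℝ => ![x.1, x.2.1, x.2.2]) := by
    refine measurable_pi_lambda _ fun i => ?_
    fin_cases i <;> simp <;> fun_prop
  refine Measure.pi_eq fun s hs => ?_
  rw [Measure.map_apply hm (MeasurableSet.univ_pi hs)]
  have : (fun x : ℝ × ℝ × ℝ => ![x.1, x.2.1, x.2.2]) ⁻¹' (Set.univ.pi s)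
      = s 0 ×ˢ (s 1 ×ˢ s 2) := by
    ext x
    simp [Fin.forall_fin_succ]
  rw [this, Measure.prod_prod, Measure.prod_prod, Fin.prod_univ_three, mul_assoc]

lemma csg_abs_le {Z : ℤ → Ω → ℝ} {r : ℤ → ℝ} (hZ : IsCSG Z r) (m : ℤ) : |r m| ≤ r 0 := by
  have h1 := csg_quadratic_nonneg hZ ![0, m] ![1, 1]
  have h2 := csg_quadratic_nonneg hZ ![0, m] ![1, -1]
  simp [Fin.sum_univ_two, csg_neg hZ] at h1 h2
  rw [abs_le]
  constructor <;> linarith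

/-- Even functionals of two coordinates of a Gaussian sequence decouple given a common factor. -/
lemma csg_integral_mul_even [IsProbabilityMeasure (ℙ : Measure Ω)] {Z : ℤ → Ω → ℝ} {r : ℤ → ℝ}
    (hZ : IsCSG Z r) (i j : ℤ) {f h : ℝ → ℝ} (hf : Continuous f) (hh : Continuous h)
    (hhe : ∀ x, h (-x) = h x)
    (hint : Integrable (fun ω => f (Z i ω) * h (Z j ω)) (ℙ : Measure Ω))
    {ρ : ℝ} (hρ : ρ = |r (j - i)| / r 0) :
    ∫ ω, f (Z i ω) * h (Z j ω)
      = ∫ x, (∫ w, f (√(r 0) * (√ρ * x + √(1 - ρ) * w)) ∂(gaussianReal 0 1))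
        * (∫ w, h (√(r 0) * (√ρ * x + √(1 - ρ) * w)) ∂(gaussianReal 0 1)) ∂(gaussianReal 0 1) := by
  have hr := hZ.2.2.2
  have hρ0 : 0 ≤ ρ := by rw [hρ]; positivity
  have hρ1 : ρ ≤ 1 := by rw [hρ, div_le_one hr]; exact csg_abs_le hZ _
  obtain ⟨e, he2, her, hhe'⟩ : ∃ e : ℝ, e * e = 1 ∧ e * |r (j - i)| = r (j - i) ∧
      ∀ x, h (e * x) = h x := by
    rcases le_total 0 (r (j - i)) with h0 | h0
    · exact ⟨1, by simp, by rw [abs_of_nonneg h0, one_mul], by simp⟩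
    · exact ⟨-1, by simp, by rw [abs_of_nonpos h0]; ring, by simpa using hhe⟩
  have hs0 : √(r 0) * √(r 0) = r 0 := Real.mul_self_sqrt hr.le
  have hs1 : √ρ * √ρ = ρ := Real.mul_self_sqrt hρ0
  have hs2 : √(1 - ρ) * √(1 - ρ) = 1 - ρ := Real.mul_self_sqrt (by linarith)
  have hcr : e * (r 0 * ρ) = r (j - i) := by
    rw [hρ, mul_div_cancel₀ _ hr.ne', her]
  have hcr' : r (i - j) = r (j - i) := by rw [← csg_neg hZ, neg_sub]
  set B : Fin 2 → Fin 3 → ℝ := ![![√(r 0) * √ρ, √(r 0) * √(1 - ρ), 0],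
    ![e * (√(r 0) * √ρ), 0, e * (√(r 0) * √(1 - ρ))]] with hBdef
  have hB : ∀ a a' : Fin 2, ∑ l, B a l * B a' l = r (![i, j] a' - ![i, j] a) := by
    intro a a'
    fin_cases a <;> fin_cases a' <;> simp [hBdef, Fin.sum_univ_three]
    · linear_combination (ρ + (1 - ρ)) * hs0 + √(r 0) * √(r 0) * (hs1 + hs2)
    · linear_combination hcr + e * ρ * hs0 + e * √(r 0) * √(r 0) * hs1
    · rw [hcr']
      linear_combination hcr + e * ρ * hs0 + e * √(r 0) * √(r 0) * hs1
    · linear_combination e * e * (ρ + (1 - ρ)) * hs0 + e * e * √(r 0) * √(r 0) * (hs1 + hs2)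
        + r 0 * he2
  have hmap := csg_map_eq hZ ![i, j] B hB
  have hm3 : Measurable (fun x : ℝ × ℝ × ℝ => ![x.1, x.2.1, x.2.2]) := by
    refine measurable_pi_lambda _ fun i => ?_
    fin_cases i <;> simp <;> fun_prop
  have hmB : Measurable (fun (ξ : Fin 3 → ℝ) (i : Fin 2) => ∑ j, B i j * ξ j) := by fun_prop
  rw [stdPi_three, Measure.map_map hmB hm3] at hmap
  have hmZ : Measurable (fun ω (a : Fin 2) => Z (![i, j] a) ω) :=
    measurable_pi_lambda _ fun a => hZ.1 _
  have hfh : Continuous (fun x : Fin 2 → ℝ => f (x 0) * h (x 1)) := by fun_prop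
  have hint1 : Integrable (fun x : Fin 2 → ℝ => f (x 0) * h (x 1))
      (Measure.map (fun ω (a : Fin 2) => Z (![i, j] a) ω) (ℙ : Measure Ω)) := by
    rw [integrable_map_measure hfh.aestronglyMeasurable hmZ.aemeasurable]
    exact hint
  have hI : ∫ ω, f (Z i ω) * h (Z j ω) = ∫ x : Fin 2 → ℝ, f (x 0) * h (x 1)
      ∂(Measure.map (fun ω (a : Fin 2) => Z (![i, j] a) ω) (ℙ : Measure Ω)) := by
    rw [integral_map hmZ.aemeasurable hfh.aestronglyMeasurable]
    rfl
  have hcomp : ∀ x : ℝ × ℝ × ℝ, (fun x : Fin 2 → ℝ => f (x 0) * h (x 1))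
      (((fun (ξ : Fin 3 → ℝ) (i : Fin 2) => ∑ j, B i j * ξ j) ∘
        fun x : ℝ × ℝ × ℝ => ![x.1, x.2.1, x.2.2]) x)
      = f (√(r 0) * (√ρ * x.1 + √(1 - ρ) * x.2.1))
        * h (√(r 0) * (√ρ * x.1 + √(1 - ρ) * x.2.2)) := by
    intro x
    rw [← hhe' (√(r 0) * (√ρ * x.1 + √(1 - ρ) * x.2.2))]
    simp only [hBdef, Function.comp, Fin.sum_univ_three, Matrix.cons_val_zero,
      Matrix.cons_val_one, Matrix.cons_val]
    congr 2 <;> ring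
  rw [hmap, integrable_map_measure hfh.aestronglyMeasurable (hmB.comp hm3).aemeasurable] at hint1
  have hint2 := hint1.congr (ae_of_all _ hcomp)
  rw [hI, hmap, integral_map (hmB.comp hm3).aemeasurable hfh.aestronglyMeasurable]
  simp_rw [hcomp]
  rw [integral_prod _ hint2]
  refine integral_congr_ae (ae_of_all _ fun x => ?_)
  exact integral_prod_mul (fun w => f (√(r 0) * (√ρ * x + √(1 - ρ) * w)))
    (fun w => h (√(r 0) * (√ρ * x + √(1 - ρ) * w)))

lemma memLp_evenPoly_comp {Z : ℤ → Ω → ℝ} {r : ℤ → ℝ} [IsProbabilityMeasure (ℙ : Measure Ω)]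
    (hZ : IsCSG Z r) (c : ℕ → ℝ) (p : ℕ) (k : ℤ) :
    MemLp (fun ω => evenPoly c p (Z k ω)) 2 (ℙ : Measure Ω) := by
  have hm : AEStronglyMeasurable (fun ω => evenPoly c p (Z k ω)) (ℙ : Measure Ω) :=
    ((continuous_evenPoly c p).measurable.comp (hZ.1 k)).aestronglyMeasurable
  rw [memLp_two_iff_integrable_sq hm]
  obtain ⟨C, hC, h⟩ := exists_abs_evenPoly_le c p
  have hg : Integrable (fun x => evenPoly c p x ^ 2) (gaussianReal 0 (r 0).toNNReal) := by
    refine ((integrable_one_add_sq_pow (r 0).toNNReal (2 * p)).const_mul ((2 * C) ^ 2)).mono'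
      ((continuous_evenPoly c p).pow 2).aestronglyMeasurable (ae_of_all _ fun x => ?_)
    have h1 : (1 : ℝ) ≤ (1 + x ^ 2) ^ p := one_le_pow₀ (by nlinarith [sq_nonneg x])
    have h2 : x ^ (2 * p) ≤ (1 + x ^ 2) ^ p := by
      rw [pow_mul]; exact pow_le_pow_left₀ (sq_nonneg x) (by linarith) p
    have h3 : |evenPoly c p x| ≤ (2 * C) * (1 + x ^ 2) ^ p := by
      refine (h x).trans ?_
      nlinarith
    rw [Real.norm_eq_abs, abs_pow, mul_comm 2 p, pow_mul, ← mul_pow]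
    exact pow_le_pow_left₀ (abs_nonneg _) h3 2
  rw [← csg_map_single hZ k] at hg
  exact (integrable_map_measure ((continuous_evenPoly c p).pow 2).aestronglyMeasurable
    (hZ.1 k).aemeasurable).1 hg

lemma integral_evenPoly_comp {Z : ℤ → Ω → ℝ} {r : ℤ → ℝ} (hZ : IsCSG Z r)
    (c : ℕ → ℝ) (p : ℕ) (k : ℤ) :
    ∫ ω, evenPoly c p (Z k ω) = lamE (evenPoly c p) Z := by
  have h : ∀ k, ∫ ω, evenPoly c p (Z k ω)
      = ∫ x, evenPoly c p x ∂(gaussianReal 0 (r 0).toNNReal) := fun k => by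
    rw [← csg_map_single hZ k, integral_map (hZ.1 k).aemeasurable
      (continuous_evenPoly c p).aestronglyMeasurable]
  rw [lamE, h, h]

/-- Covariances of an even polynomial functional are nonnegative and quadratically small in the
correlation. -/
lemma exists_cov_evenPoly_bounds {r0 : ℝ} (hr : 0 < r0) (c : ℕ → ℝ) (p : ℕ) :
    ∃ K > 0, ∀ (Z : ℤ → Ω → ℝ) (r : ℤ → ℝ), IsProbabilityMeasure (ℙ : Measure Ω) → IsCSG Z r →
      r 0 = r0 → ∀ i j : ℤ,
      0 ≤ (∫ ω, evenPoly c p (Z i ω) * evenPoly c p (Z j ω)) - lamE (evenPoly c p) Z ^ 2 ∧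
      (∫ ω, evenPoly c p (Z i ω) * evenPoly c p (Z j ω)) - lamE (evenPoly c p) Z ^ 2
        ≤ K * r (j - i) ^ 2 := by
  set γ := gaussianReal 0 1 with hγ
  set s := √r0 with hs
  have hs0 : 0 < s := Real.sqrt_pos.2 hr
  set f := evenPoly c p with hf
  have hfc : Continuous f := continuous_evenPoly c p
  set N := 2 * p + 1 with hN
  set J : ℝ := ∫ w, (1 + w ^ 2) ^ N ∂γ with hJ
  have hJ0 : 0 ≤ J := integral_nonneg fun w => by positivity
  obtain ⟨C, hC, hfb⟩ := exists_abs_evenPoly_le c p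
  have hWint := integrable_one_add_sq_pow 1 N
  have hdom : ∀ α β : ℝ, |α| ≤ 1 → |β| ≤ 1 → ∀ x w : ℝ,
      s * |α * x| + s * |β * w| ≤ 2 * s * ((1 + x ^ 2) * (1 + w ^ 2)) := by
    intro α β hα hβ x w
    have h1 : |α * x| ≤ (1 + x ^ 2) * (1 + w ^ 2) := by
      rw [abs_mul]
      have : |α| * |x| ≤ 1 * |x| := by gcongr
      nlinarith [sq_abs x, sq_nonneg (|x| - 1), sq_nonneg (x * w), sq_nonneg w, sq_nonneg x]
    have h2 : |β * w| ≤ (1 + x ^ 2) * (1 + w ^ 2) := by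
      rw [abs_mul]
      have : |β| * |w| ≤ 1 * |w| := by gcongr
      nlinarith [sq_abs w, sq_nonneg (|w| - 1), sq_nonneg (x * w), sq_nonneg w, sq_nonneg x]
    nlinarith
  have hfx : ∀ α β : ℝ, |α| ≤ 1 → |β| ≤ 1 → ∀ x w : ℝ, |f (s * (α * x + β * w))|
      ≤ C * (1 + 2 * s) ^ (2 * p) * 2 * (1 + x ^ 2) ^ N * (1 + w ^ 2) ^ N := by
    intro α β hα hβ x w
    set T := (1 + 2 * s) * ((1 + x ^ 2) * (1 + w ^ 2)) with hT
    have hW1 : 1 ≤ (1 + x ^ 2) * (1 + w ^ 2) := by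
      nlinarith [sq_nonneg x, sq_nonneg w, mul_nonneg (sq_nonneg x) (sq_nonneg w)]
    have hT1 : 1 ≤ T := by nlinarith
    have h1 : |s * (α * x + β * w)| ≤ T := by
      rw [abs_mul, abs_of_pos hs0]
      have := mul_le_mul_of_nonneg_left (abs_add_le (α * x) (β * w)) hs0.le
      have := hdom α β hα hβ x w
      nlinarith
    have h2 : (s * (α * x + β * w)) ^ (2 * p) ≤ T ^ (2 * p) := by
      rw [← (even_two_mul p).pow_abs]
      exact pow_le_pow_left₀ (abs_nonneg _) h1 _
    have h3 : 1 ≤ T ^ (2 * p) := one_le_pow₀ hT1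
    have h4 : ((1 + x ^ 2) * (1 + w ^ 2)) ^ (2 * p) ≤ ((1 + x ^ 2) * (1 + w ^ 2)) ^ N :=
      pow_le_pow_right₀ hW1 (by omega)
    calc _ ≤ C * (1 + (s * (α * x + β * w)) ^ (2 * p)) := hfb _
      _ ≤ C * (2 * T ^ (2 * p)) := by gcongr; linarith
      _ = C * (1 + 2 * s) ^ (2 * p) * 2 * ((1 + x ^ 2) * (1 + w ^ 2)) ^ (2 * p) := by
          rw [hT, mul_pow]; ring
      _ ≤ C * (1 + 2 * s) ^ (2 * p) * 2 * ((1 + x ^ 2) * (1 + w ^ 2)) ^ N := by gcongr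
      _ = _ := by rw [mul_pow]; ring
  set K2 : ℝ := ∑ k ∈ Finset.range (p + 1), |c k| * (2 * (2 * k : ℕ) ^ 2) with hK2
  have hK20 : 0 ≤ K2 := by positivity
  set K3 : ℝ := K2 * s ^ 2 * (1 + 2 * s) ^ (2 * p) with hK3
  have hK30 : 0 ≤ K3 := by positivity
  have hsd : ∀ α β : ℝ, |α| ≤ 1 → |β| ≤ 1 → ∀ x w : ℝ,
      |f (s * (α * x + β * w)) + f (s * (α * x + β * -w)) - 2 * f (s * (β * w))|
        ≤ K3 * α ^ 2 * (1 + x ^ 2) ^ N * (1 + w ^ 2) ^ N := by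
    intro α β hα hβ x w
    set T := (1 + 2 * s) * ((1 + x ^ 2) * (1 + w ^ 2)) with hT
    have hW1 : 1 ≤ (1 + x ^ 2) * (1 + w ^ 2) := by
      nlinarith [sq_nonneg x, sq_nonneg w, mul_nonneg (sq_nonneg x) (sq_nonneg w)]
    have hT1 : 1 ≤ T := by nlinarith
    have hab : |s * (α * x)| + |s * (β * w)| ≤ T := by
      rw [abs_mul s, abs_mul s, abs_of_pos hs0]
      have := hdom α β hα hβ x w
      nlinarith
    have h0 : f (s * (α * x + β * -w)) = f (s * (β * w) - s * (α * x)) := by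
      rw [hf, ← evenPoly_neg]; congr 1; ring
    have h0' : f (s * (α * x + β * w)) = f (s * (β * w) + s * (α * x)) := by
      congr 1; ring
    rw [h0, h0', hf]
    simp only [evenPoly]
    rw [← Finset.sum_add_distrib, Finset.mul_sum, ← Finset.sum_sub_distrib]
    refine (Finset.abs_sum_le_sum_abs _ _).trans ?_
    calc _ ≤ ∑ k ∈ Finset.range (p + 1),
          |c k| * (2 * (2 * k : ℕ) ^ 2) * ((s * (α * x)) ^ 2 * T ^ (2 * p)) := by
          refine Finset.sum_le_sum fun k hk => ?_
          have hk' := Finset.mem_range.1 hk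
          have := (abs_second_difference_pow_le hab hT1 (2 * k)).2
          rw [show ∀ A B D : ℝ, c k * A + c k * B - 2 * (c k * D) = c k * (A + B - 2 * D) by
            intros; ring, abs_mul]
          have hle : T ^ (2 * k) ≤ T ^ (2 * p) := pow_le_pow_right₀ hT1 (by omega)
          calc _ ≤ |c k| * (2 * (2 * k : ℕ) ^ 2 * (s * (α * x)) ^ 2 * T ^ (2 * k)) := by gcongr
            _ ≤ |c k| * (2 * (2 * k : ℕ) ^ 2 * (s * (α * x)) ^ 2 * T ^ (2 * p)) := by gcongr
            _ = _ := by ring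
      _ = K3 * α ^ 2 * (x ^ 2 * ((1 + x ^ 2) ^ (2 * p) * (1 + w ^ 2) ^ (2 * p))) := by
          rw [← Finset.sum_mul, ← hK2, hT, hK3, mul_pow (1 + 2 * s), mul_pow (1 + x ^ 2)]; ring
      _ ≤ K3 * α ^ 2 * ((1 + x ^ 2) * ((1 + x ^ 2) ^ (2 * p) * ((1 + w ^ 2) ^ (2 * p)
            * (1 + w ^ 2)))) := by
          gcongr
          · linarith
          · exact le_mul_of_one_le_right (by positivity) (by nlinarith [sq_nonneg w])
      _ = _ := by rw [hN, pow_succ, pow_succ]; ring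
  set J2 : ℝ := ∫ x, (1 + x ^ 2) ^ (2 * N) ∂γ with hJ2
  refine ⟨(K3 / 2 * J) ^ 2 * J2 / r0 ^ 2 + 1, by positivity, fun Z r hP hZ hr0 i j => ?_⟩
  have hsym : ∀ φ : ℝ → ℝ, Continuous φ → ∫ w, φ (-w) ∂γ = ∫ w, φ w ∂γ := by
    intro φ hφ
    have h := gaussianReal_map_neg (μ := 0) (v := 1)
    rw [neg_zero] at h
    conv_rhs => rw [hγ, ← h]
    rw [integral_map (by fun_prop) hφ.aestronglyMeasurable]
  set ρ := |r (j - i)| / r 0 with hρ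
  have hrpos : 0 < r 0 := hr0 ▸ hr
  have hρ0 : 0 ≤ ρ := by positivity
  have hρ1 : ρ ≤ 1 := by rw [hρ, div_le_one hrpos]; exact csg_abs_le hZ _
  set α := √ρ with hα
  set β := √(1 - ρ) with hβ
  have hα1 : |α| ≤ 1 := by
    rw [abs_of_nonneg (Real.sqrt_nonneg _)]; exact Real.sqrt_le_one.2 hρ1
  have hβ1 : |β| ≤ 1 := by
    rw [abs_of_nonneg (Real.sqrt_nonneg _)]; exact Real.sqrt_le_one.2 (by linarith)
  have hα2 : α ^ 2 = ρ := Real.sq_sqrt hρ0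
  have hL2 := fun k => memLp_evenPoly_comp hZ c p k
  have hpair := csg_integral_mul_even hZ i j hfc hfc (evenPoly_neg c p)
    ((hL2 i).integrable_mul (hL2 j)) hρ
  have hone := csg_integral_mul_even hZ i j hfc continuous_one (fun _ => rfl)
    (by simpa using (hL2 i).integrable (by norm_num)) hρ
  simp only [Pi.one_apply, mul_one, integral_const, smul_eq_mul, probReal_univ] at hone
  rw [integral_evenPoly_comp hZ] at hone
  rw [hr0, ← hs, ← hα, ← hβ] at hpair hone
  set F : ℝ → ℝ := fun x => ∫ w, f (s * (α * x + β * w)) ∂γ with hF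
  set lam := lamE (evenPoly c p) Z with hlam
  have hwint : ∀ x, Integrable (fun w => f (s * (α * x + β * w))) γ := fun x =>
    (hWint.const_mul (C * (1 + 2 * s) ^ (2 * p) * 2 * (1 + x ^ 2) ^ N)).mono'
      (by fun_prop) (ae_of_all _ fun w => hfx α β hα1 hβ1 x w)
  have hFm : AEStronglyMeasurable F γ := by
    have : Continuous (fun z : ℝ × ℝ => f (s * (α * z.1 + β * z.2))) := by fun_prop
    exact this.stronglyMeasurable.integral_prod_right.aestronglyMeasurable
  have hFb : ∀ x, |F x| ≤ C * (1 + 2 * s) ^ (2 * p) * 2 * J * (1 + x ^ 2) ^ N := by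
    intro x
    refine abs_integral_le_integral_abs.trans ((integral_mono (hwint x).abs
      (hWint.const_mul _) fun w => hfx α β hα1 hβ1 x w).trans ?_)
    rw [integral_const_mul, ← hJ]
    exact le_of_eq (by ring)
  have hFL2 : MemLp F 2 γ := by
    rw [memLp_two_iff_integrable_sq hFm]
    refine ((integrable_one_add_sq_pow 1 (2 * N)).const_mul
      ((C * (1 + 2 * s) ^ (2 * p) * 2 * J) ^ 2)).mono' (hFm.pow 2) (ae_of_all _ fun x => ?_)
    rw [Real.norm_eq_abs, abs_pow, mul_comm 2 N, pow_mul (1 + x ^ 2), ← mul_pow]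
    exact pow_le_pow_left₀ (abs_nonneg _) (hFb x) 2
  have hFint : Integrable F γ := hFL2.integrable (by norm_num)
  have hF2int : Integrable (fun x => F x ^ 2) γ := hFL2.integrable_sq
  have hvarF : ∀ a : ℝ, ∫ x, (F x - a) ^ 2 ∂γ
      = (∫ ω, f (Z i ω) * f (Z j ω)) - 2 * a * lam + a ^ 2 := by
    intro a
    have e : ∀ x, (F x - a) ^ 2 = F x ^ 2 - 2 * a * F x + a ^ 2 := fun x => by ring
    simp_rw [e]
    have hI : Integrable (fun x => F x ^ 2 - 2 * a * F x) γ :=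
      hF2int.sub (hFint.const_mul _)
    rw [integral_add hI (integrable_const _), integral_sub hF2int (hFint.const_mul _),
      integral_const_mul, ← hone, hpair]
    simp only [pow_two, integral_const, probReal_univ, one_smul]
    rfl
  constructor
  · have h1 := hvarF lam
    have h2 : 0 ≤ ∫ x, (F x - lam) ^ 2 ∂γ := integral_nonneg fun x => sq_nonneg _
    linarith
  · set c0 := ∫ w, f (s * (β * w)) ∂γ with hc0
    have hc0int : Integrable (fun w => f (s * (β * w))) γ := by
      simpa using hwint 0
    have hdiff : ∀ x, |F x - c0| ≤ K3 / 2 * J * ρ * (1 + x ^ 2) ^ N := by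
      intro x
      have hs1 := hsym (fun w => f (s * (α * x + β * w))) (by fun_prop)
      have hint' : Integrable (fun w => f (s * (α * x + β * -w))) γ :=
        (hWint.const_mul (C * (1 + 2 * s) ^ (2 * p) * 2 * (1 + x ^ 2) ^ N)).mono'
          (by fun_prop) (ae_of_all _ fun w => by
            have := hfx α β hα1 hβ1 x (-w)
            rwa [neg_sq] at this)
      have h2 : 2 * (F x - c0) = ∫ w, (f (s * (α * x + β * w)) + f (s * (α * x + β * -w))
          - 2 * f (s * (β * w))) ∂γ := by
        have hI : Integrable
            (fun w => f (s * (α * x + β * w)) + f (s * (α * x + β * -w))) γ :=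
          (hwint x).add hint'
        rw [integral_sub hI (hc0int.const_mul 2),
          integral_add (hwint x) hint', integral_const_mul, hs1]
        ring
      have h3 : |2 * (F x - c0)| ≤ K3 * α ^ 2 * (1 + x ^ 2) ^ N * J := by
        rw [h2]
        refine abs_integral_le_integral_abs.trans ((integral_mono
          (((hwint x).add hint').sub (hc0int.const_mul 2)).abs
          (hWint.const_mul (K3 * α ^ 2 * (1 + x ^ 2) ^ N))
          fun w => hsd α β hα1 hβ1 x w).trans ?_)
        rw [integral_const_mul]
      rw [abs_mul, abs_two, hα2] at h3
      linarith
    have h1 := hvarF c0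
    have h2 : ∫ x, (F x - c0) ^ 2 ∂γ ≤ (K3 / 2 * J) ^ 2 * ρ ^ 2 * J2 := by
      rw [hJ2, ← integral_const_mul]
      refine integral_mono_of_nonneg (ae_of_all _ fun x => sq_nonneg _)
        ((integrable_one_add_sq_pow 1 (2 * N)).const_mul _) (ae_of_all _ fun x => ?_)
      beta_reduce
      rw [← sq_abs, mul_comm 2 N, pow_mul (1 + x ^ 2), ← mul_pow, ← mul_pow]
      exact pow_le_pow_left₀ (abs_nonneg _) (hdiff x) 2
    have h3 : ρ ^ 2 = r (j - i) ^ 2 / r0 ^ 2 := by rw [hρ, div_pow, sq_abs, hr0]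
    have h4 : (K3 / 2 * J) ^ 2 * ρ ^ 2 * J2
        = ((K3 / 2 * J) ^ 2 * J2 / r0 ^ 2) * r (j - i) ^ 2 := by rw [h3]; ring
    have h5 := sq_nonneg (r (j - i))
    have h6 := sq_nonneg (lam - c0)
    nlinarith

lemma varU_evenPoly_eq {Z : ℤ → Ω → ℝ} {r : ℤ → ℝ} [IsProbabilityMeasure (ℙ : Measure Ω)]
    (hZ : IsCSG Z r) (c : ℕ → ℝ) (p n : ℕ) :
    varU (evenPoly c p) Z n = 1 / (n : ℝ) * ∑ i ∈ Finset.range n, ∑ j ∈ Finset.range n,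
      ((∫ ω, evenPoly c p (Z i ω) * evenPoly c p (Z j ω)) - lamE (evenPoly c p) Z ^ 2) := by
  rcases Nat.eq_zero_or_pos n with rfl | hn
  · simp [varU, Ustat]
  have hn' : (0 : ℝ) < n := by exact_mod_cast hn
  set f := evenPoly c p with hf
  set lam := lamE f Z with hlam
  have hL2 := fun k => memLp_evenPoly_comp hZ c p k
  have hI : ∀ k : ℤ, Integrable (fun ω => f (Z k ω)) (ℙ : Measure Ω) :=
    fun k => (hL2 k).integrable (by norm_num)
  have hII : ∀ i j : ℤ, Integrable (fun ω => f (Z i ω) * f (Z j ω)) (ℙ : Measure Ω) :=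
    fun i j => (hL2 i).integrable_mul (hL2 j)
  have e : ∀ ω, Ustat f Z n ω ^ 2 = 1 / (n : ℝ) * ∑ i ∈ Finset.range n, ∑ j ∈ Finset.range n,
      (f (Z i ω) * f (Z j ω) - lam * f (Z i ω) - lam * f (Z j ω) + lam ^ 2) := by
    intro ω
    have h1 : Qvar f Z n ω - lamE f Z
        = 1 / (n : ℝ) * ∑ i ∈ Finset.range n, (f (Z i ω) - lam) := by
      rw [Qvar, Finset.sum_sub_distrib, mul_sub]
      simp only [Finset.sum_const, Finset.card_range, nsmul_eq_mul, ← hlam]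
      field_simp
    rw [Ustat, mul_pow, Real.sq_sqrt hn'.le, h1, mul_pow, pow_two (∑ i ∈ _, _),
      Finset.sum_mul_sum, ← mul_assoc]
    congr 1
    · field_simp
    · exact Finset.sum_congr rfl fun i _ => Finset.sum_congr rfl fun j _ => by ring
  have hterm : ∀ i j : ℤ, Integrable
      (fun ω => f (Z i ω) * f (Z j ω) - lam * f (Z i ω) - lam * f (Z j ω) + lam ^ 2)
      (ℙ : Measure Ω) := fun i j =>
    (((hII i j).sub ((hI i).const_mul lam)).sub ((hI j).const_mul lam)).add (integrable_const _)
  rw [varU]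
  simp_rw [e]
  rw [integral_const_mul, integral_finsetSum _ fun (i : ℕ) _ => integrable_finsetSum _ fun (j : ℕ) _ =>
    hterm (i : ℤ) (j : ℤ)]
  congr 1
  refine Finset.sum_congr rfl fun i _ => ?_
  rw [integral_finsetSum _ fun (j : ℕ) _ => hterm (i : ℤ) (j : ℤ)]
  refine Finset.sum_congr rfl fun j _ => ?_
  have h1 : Integrable (fun ω => f (Z i ω) * f (Z j ω) - lam * f (Z i ω)) (ℙ : Measure Ω) :=
    (hII i j).sub ((hI i).const_mul lam)
  have h2 : Integrable (fun ω => f (Z i ω) * f (Z j ω) - lam * f (Z i ω) - lam * f (Z j ω))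
      (ℙ : Measure Ω) := h1.sub ((hI j).const_mul lam)
  rw [integral_add h2 (integrable_const _), integral_sub h1 ((hI j).const_mul lam),
    integral_sub (hII i j) ((hI i).const_mul lam), integral_const_mul, integral_const_mul,
    integral_evenPoly_comp hZ, integral_evenPoly_comp hZ, ← hlam]
  simp
  ring

lemma varU_one_le {Z : ℤ → Ω → ℝ} {r : ℤ → ℝ} [IsProbabilityMeasure (ℙ : Measure Ω)]
    (hZ : IsCSG Z r) (c : ℕ → ℝ) (p : ℕ) {n : ℕ} (hn : 1 ≤ n) :
    varU (evenPoly c p) Z 1 ≤ varU (evenPoly c p) Z n := by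
  obtain ⟨K, -, hK⟩ := exists_cov_evenPoly_bounds (Ω := Ω) hZ.2.2.2 c p
  have hcov := fun i j => (hK Z r inferInstance hZ rfl i j).1
  have hn' : (0 : ℝ) < n := by exact_mod_cast hn
  have hdiag : ∀ i : ℤ, ∫ ω, evenPoly c p (Z i ω) * evenPoly c p (Z i ω)
      = ∫ ω, evenPoly c p (Z 0 ω) * evenPoly c p (Z 0 ω) := by
    have h : ∀ k, ∫ ω, evenPoly c p (Z k ω) * evenPoly c p (Z k ω)
        = ∫ x, evenPoly c p x * evenPoly c p x ∂(gaussianReal 0 (r 0).toNNReal) := fun k => by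
      rw [← csg_map_single hZ k, integral_map (hZ.1 k).aemeasurable]
      exact ((continuous_evenPoly c p).mul (continuous_evenPoly c p)).aestronglyMeasurable
    intro i
    rw [h, h]
  rw [varU_evenPoly_eq hZ, varU_evenPoly_eq hZ, one_div_mul_eq_div _ (∑ i ∈ _, _),
    one_div_mul_eq_div, le_div_iff₀ hn']
  simp only [Nat.cast_one, div_one, Finset.range_one, Finset.sum_singleton, Nat.cast_zero]
  calc _ = ∑ i ∈ Finset.range n, ((∫ ω, evenPoly c p (Z i ω) * evenPoly c p (Z i ω))
          - lamE (evenPoly c p) Z ^ 2) := by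
        simp_rw [hdiag]
        simp only [Finset.sum_const, Finset.card_range, nsmul_eq_mul]
        ring
    _ ≤ _ := Finset.sum_le_sum fun i hi =>
        Finset.single_le_sum (f := fun j : ℕ =>
          (∫ ω, evenPoly c p (Z i ω) * evenPoly c p (Z j ω)) - lamE (evenPoly c p) Z ^ 2)
          (fun j _ => hcov i j) hi

lemma exists_varU_le {Z : ℤ → Ω → ℝ} {r : ℤ → ℝ} [IsProbabilityMeasure (ℙ : Measure Ω)]
    (hZ : IsCSG Z r) (hsum : Summable fun j : ℤ => (r j) ^ 2) (c : ℕ → ℝ) (p : ℕ) :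
    ∃ K > 0, ∀ n, varU (evenPoly c p) Z n ≤ K := by
  obtain ⟨K, hK0, hK⟩ := exists_cov_evenPoly_bounds (Ω := Ω) hZ.2.2.2 c p
  have ht : 0 ≤ ∑' j, r j ^ 2 := tsum_nonneg fun _ => sq_nonneg _
  refine ⟨K * (∑' j, r j ^ 2) + 1, by positivity, fun n => ?_⟩
  rw [varU_evenPoly_eq hZ]
  rcases Nat.eq_zero_or_pos n with rfl | hn
  · simp; positivity
  have hn' : (0 : ℝ) < n := by exact_mod_cast hn
  have hrow : ∀ i : ℕ, ∑ j ∈ Finset.range n, r ((j : ℤ) - (i : ℤ)) ^ 2 ≤ ∑' j, r j ^ 2 := by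
    intro i
    rw [← Finset.sum_image (s := Finset.range n) (g := fun j : ℕ => (j : ℤ) - (i : ℤ))
      (f := fun m : ℤ => r m ^ 2)]
    · exact hsum.sum_le_tsum _ fun _ _ => sq_nonneg _
    · intro x _ y _ h
      simpa using h
  have hS : ∑ i ∈ Finset.range n, ∑ j ∈ Finset.range n,
      ((∫ ω, evenPoly c p (Z i ω) * evenPoly c p (Z j ω)) - lamE (evenPoly c p) Z ^ 2)
      ≤ n * (K * ∑' j, r j ^ 2) := by
    refine (Finset.sum_le_sum (g := fun _ => K * ∑' j, r j ^ 2) fun (i : ℕ) _ =>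
      (Finset.sum_le_sum fun (j : ℕ) _ =>
        (hK Z r inferInstance hZ rfl (i : ℤ) (j : ℤ)).2).trans ?_).trans (le_of_eq ?_)
    · rw [← Finset.mul_sum]
      exact mul_le_mul_of_nonneg_left (hrow i) hK0.le
    · simp
  rw [one_div_mul_eq_div, div_le_iff₀ hn']
  nlinarith

lemma measurable_evalVec {Z : ℤ → Ω → ℝ} {r : ℤ → ℝ} (hZ : IsCSG Z r) (n : ℕ) :
    Measurable (fun ω (i : Fin n) => Z (i : ℤ) ω) :=
  measurable_pi_lambda _ fun _ => hZ.1 _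

/-- The law of a Gaussian vector on `ℓ^q` has rotation-invariant square. -/
lemma map_rotation_vecLaw [IsProbabilityMeasure (ℙ : Measure Ω)] {Z : ℤ → Ω → ℝ} {r : ℤ → ℝ}
    (hZ : IsCSG Z r) (n : ℕ) (q : ℝ≥0∞) [Fact (1 ≤ q)] (θ : ℝ) :
    let ν : Measure (PiLp q fun _ : Fin n => ℝ) := (vecLaw Z n).map (WithLp.toLp q)
    (ν.prod ν).map (ContinuousLinearMap.rotation θ) = ν.prod ν := by
  intro ν
  have hm := measurable_evalVec hZ n
  have hto : Measurable (WithLp.toLp q : (Fin n → ℝ) → PiLp q fun _ : Fin n => ℝ) := by fun_prop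
  have hν : ∀ L : StrongDual ℝ (PiLp q fun _ : Fin n => ℝ),
      ∃ v : ℝ≥0, ν.map L = gaussianReal 0 v := by
    intro L
    obtain ⟨a, ha⟩ := continuousLinearMap_pi_apply
      (L.comp ((PiLp.continuousLinearEquiv q ℝ fun _ : Fin n => ℝ).symm :
        (Fin n → ℝ) →L[ℝ] PiLp q fun _ : Fin n => ℝ))
    refine ⟨(∑ i : Fin n, ∑ j : Fin n, a i * a j * r ((j : ℤ) - (i : ℤ))).toNNReal, ?_⟩
    · rw [← csg_map_linear hZ (fun i : Fin n => (i : ℤ)) a,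
        Measure.map_map (by fun_prop) hto, vecLaw, Measure.map_map (by fun_prop) hm]
      congr 1
      ext ω
      exact ha _
  have hg : IsGaussian ν := isGaussian_of_map_eq_gaussianReal fun L => by
    obtain ⟨v, hv⟩ := hν L
    exact ⟨0, v, hv⟩
  refine IsGaussian.map_rotation_eq_self_of_forall_strongDual_eq_zero (fun L => ?_) θ
  obtain ⟨v, hv⟩ := hν L
  have : ∫ x, L x ∂ν = ∫ y, y ∂(ν.map L) :=
    (integral_map (f := fun y : ℝ => y) L.continuous.measurable.aemeasurable
      aestronglyMeasurable_id).symm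
  rw [this, hv]
  simp

lemma norm_pow_toLp {p n : ℕ} (hp : 1 ≤ p) (x : Fin n → ℝ) :
    ‖(WithLp.toLp ((2 * p : ℕ) : ℝ≥0∞) x : PiLp ((2 * p : ℕ) : ℝ≥0∞) fun _ : Fin n => ℝ)‖
      ^ (2 * p) = ∑ i, x i ^ (2 * p) := by
  have h0 : (((2 * p : ℕ) : ℝ≥0∞)).toReal = ((2 * p : ℕ) : ℝ) := ENNReal.toReal_natCast _
  have hpos : (0 : ℝ) < ((2 * p : ℕ) : ℝ) := by exact_mod_cast (by omega : 0 < 2 * p)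
  rw [PiLp.norm_eq_sum (by rw [h0]; exact hpos), h0]
  simp only [Real.rpow_natCast, Real.norm_eq_abs, (even_two_mul p).pow_abs]
  rw [← Real.rpow_natCast, ← Real.rpow_mul
    (Finset.sum_nonneg fun i _ => (even_two_mul p).pow_nonneg _), one_div,
    inv_mul_cancel₀ hpos.ne', Real.rpow_one]

lemma vecLaw_empirical_moment_gt_le [IsProbabilityMeasure (ℙ : Measure Ω)]
    {Z : ℤ → Ω → ℝ} {r : ℤ → ℝ}
    (hZ : IsCSG Z r) (hsum : Summable fun j : ℤ => (r j) ^ 2) (p : ℕ) :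
    ∃ K > 0, ∃ M > 0, ∀ n : ℕ, 1 ≤ n →
      ENNReal.ofReal (1 - K / n)
        ≤ vecLaw Z n {x | ∑ i, x i ^ (2 * p) ≤ n * M} := by
  set c : ℕ → ℝ := fun k => if k = p then 1 else 0 with hc
  have hcx : ∀ x, evenPoly c p x = x ^ (2 * p) := by
    intro x
    simp [evenPoly, hc]
  obtain ⟨K, hK0, hK⟩ := exists_varU_le hZ hsum c p
  have hlam : 0 ≤ lamE (evenPoly c p) Z := integral_nonneg fun ω => by
    simp only [hcx]; exact (even_two_mul p).pow_nonneg _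
  refine ⟨K, hK0, lamE (evenPoly c p) Z + 1, by positivity, fun n hn => ?_⟩
  have hn' : (0 : ℝ) < n := by exact_mod_cast hn
  set S : Set (Fin n → ℝ) := {x | ∑ i, x i ^ (2 * p) ≤ n * (lamE (evenPoly c p) Z + 1)} with hS
  have hSm : MeasurableSet S := measurableSet_le (by fun_prop) measurable_const
  have hm := measurable_evalVec hZ n
  rw [vecLaw, Measure.map_apply hm hSm]
  set T := (fun ω (i : Fin n) => Z (i : ℤ) ω) ⁻¹' S with hT
  have hUm : Measurable (Ustat (evenPoly c p) Z n) := by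
    unfold Ustat Qvar
    have := hZ.1
    have := (continuous_evenPoly c p).measurable
    fun_prop
  have hUint : Integrable (fun ω => Ustat (evenPoly c p) Z n ω ^ 2) (ℙ : Measure Ω) := by
    have h1 : MemLp (Ustat (evenPoly c p) Z n) 2 (ℙ : Measure Ω) := by
      unfold Ustat Qvar
      exact (((memLp_finsetSum _ fun i _ => memLp_evenPoly_comp hZ c p _).const_mul _).sub
        (memLp_const _)).const_mul _
    exact h1.integrable_sq
  have hcomp : (ℙ : Measure Ω) Tᶜ ≤ ENNReal.ofReal (K / n) := by
    have hsub : Tᶜ ⊆ {ω | (n : ℝ) ≤ Ustat (evenPoly c p) Z n ω ^ 2} := by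
      intro ω hω
      have h1 : (n : ℝ) * (lamE (evenPoly c p) Z + 1) < ∑ i : Fin n, Z (i : ℤ) ω ^ (2 * p) := by
        simpa [hT, hS] using hω
      have h2 : 1 ≤ Qvar (evenPoly c p) Z n ω - lamE (evenPoly c p) Z := by
        rw [Qvar]
        simp only [hcx]
        rw [Finset.sum_range fun i : ℕ => Z (i : ℤ) ω ^ (2 * p), one_div_mul_eq_div,
          le_sub_iff_add_le, le_div_iff₀ hn']
        nlinarith
      show (n : ℝ) ≤ (√(n : ℝ) * (Qvar (evenPoly c p) Z n ω - lamE (evenPoly c p) Z)) ^ 2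
      rw [mul_pow, Real.sq_sqrt hn'.le]
      exact le_mul_of_one_le_right hn'.le (one_le_pow₀ h2)
    have h3 := mul_meas_ge_le_integral_of_nonneg (ae_of_all _ fun ω => sq_nonneg _) hUint n
    have h4 : (ℙ : Measure Ω).real {ω | (n : ℝ) ≤ Ustat (evenPoly c p) Z n ω ^ 2} ≤ K / n := by
      rw [le_div_iff₀ hn', mul_comm]
      exact h3.trans (hK n)
    refine (measure_mono hsub).trans ?_
    rw [← ofReal_measureReal]
    exact ENNReal.ofReal_le_ofReal h4
  have hTm : MeasurableSet T := hm hSm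
  have h5 := prob_compl_eq_one_sub (μ := (ℙ : Measure Ω)) hTm.compl
  rw [compl_compl] at h5
  rw [h5, ENNReal.ofReal_sub _ (by positivity), ENNReal.ofReal_one]
  exact tsub_le_tsub_left hcomp 1

lemma exp_neg_two_mul_log_odds_le {δ : ℝ} (hδ0 : 0 < δ) (hδ : δ ≤ 1 / 4) :
    Real.exp (-(2 * Real.log ((1 - δ) / δ))) ≤ (2 * δ) ^ 2 := by
  have hR0 : 0 < (1 - δ) / δ := div_pos (by linarith) hδ0
  have h1 : ((1 - δ) / δ)⁻¹ ≤ 2 * δ := by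
    rw [inv_div, div_le_iff₀ (by linarith)]
    nlinarith
  rw [mul_comm, ← mul_neg, Real.exp_mul, Real.exp_log hR0, Real.rpow_neg hR0.le, Real.rpow_two,
    ← inv_pow]
  gcongr

set_option maxHeartbeats 400000 in
/-- Tails of the empirical moments of a Gaussian sequence decay as in the theorem of Fernique,
at a rate which improves without bound as the length of the sequence grows. -/
lemma vecLaw_empirical_moment_tail [IsProbabilityMeasure (ℙ : Measure Ω)]
    {Z : ℤ → Ω → ℝ} {r : ℤ → ℝ}
    (hZ : IsCSG Z r) (hsum : Summable fun j : ℤ => (r j) ^ 2) {p : ℕ} (hp : 1 ≤ p) :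
    ∃ A > 0, ∀ c0 > 0, ∃ n1 : ℕ, 1 ≤ n1 ∧ ∃ C > 0, ∀ n ≥ n1, ∀ τ ≥ A,
      vecLaw Z n {x | τ ≤ 1 / (n : ℝ) * ∑ i, x i ^ (2 * p)}
        ≤ ENNReal.ofReal (C / (n : ℝ) ^ 2 * Real.exp (-c0 * τ ^ (1 / (p : ℝ)))) := by
  obtain ⟨K, hK0, M, hM0, hKM⟩ := vecLaw_empirical_moment_gt_le hZ hsum p
  set D : ℝ := 8 * (1 + √2) ^ 2 with hD
  have hD0 : 0 < D := by positivity
  set T0 : ℝ := 2 + 8 * D with hT0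
  set S0 : ℝ≥0∞ := ∑' k : ℕ, ENNReal.ofReal (Real.exp (-2⁻¹ * 2 ^ k)) with hS0
  have hS0fin : S0 < ∞ := by
    refine Summable.tsum_ofReal_lt_top ?_
    exact Real.summable_exp_nat_mul_of_ge (by norm_num)
      (fun i ↦ mod_cast (Nat.lt_pow_self (by simp)).le)
  have hp' : (0 : ℝ) < p := by exact_mod_cast hp
  refine ⟨M * T0 ^ p, by positivity, fun c0 hc0 => ?_⟩
  set Bc : ℝ := M ^ (1 / (p : ℝ)) with hBc
  have hBc0 : 0 < Bc := Real.rpow_pos_of_pos hM0 _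
  have hlim : Tendsto (fun n : ℕ => Real.log ((1 - K / n) / (K / n)) / D) atTop atTop := by
    have h1 : Tendsto (fun n : ℕ => (n : ℝ) / K - 1) atTop atTop :=
      tendsto_atTop_add_const_right _ _ (tendsto_natCast_atTop_atTop.atTop_div_const hK0)
    refine (Tendsto.atTop_div_const hD0 (Real.tendsto_log_atTop.comp h1)).congr' ?_
    filter_upwards [eventually_ge_atTop 1] with n hn
    have hn' : (n : ℝ) ≠ 0 := by positivity
    simp only [Function.comp]
    congr 2
    field_simp
  obtain ⟨n1, hn1⟩ := eventually_atTop.1 ((hlim.eventually_ge_atTop (4 * c0 * Bc)).and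
    (tendsto_natCast_atTop_atTop.eventually_ge_atTop (4 * K)))
  refine ⟨max n1 1, le_max_right _ _, (1 + S0.toReal) * (4 * K ^ 2), by positivity,
    fun n hn τ hτ => ?_⟩
  obtain ⟨hL, hn4⟩ := hn1 n (le_of_max_le_left hn)
  have hn1' : 1 ≤ n := le_of_max_le_right hn
  have hn0 : (0 : ℝ) < n := by exact_mod_cast hn1'
  set δ : ℝ := K / n with hδ
  have hδ0 : 0 < δ := by positivity
  have hδ4 : δ ≤ 1 / 4 := by
    rw [hδ, div_le_iff₀ hn0]; linarith
  set c : ℝ≥0∞ := ENNReal.ofReal (1 - δ) with hc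
  have hc1 : 1 - c = ENNReal.ofReal δ := by
    rw [hc, ← ENNReal.ofReal_one, ← ENNReal.ofReal_sub _ (by linarith)]
    congr 1; ring
  have hcr : c.toReal = 1 - δ := ENNReal.toReal_ofReal (by linarith)
  have hc1r : (1 - c).toReal = δ := by rw [hc1, ENNReal.toReal_ofReal hδ0.le]
  have hcgt : 2⁻¹ < c := by
    rw [hc, ← ENNReal.ofReal_ofNat 2, ← ENNReal.ofReal_inv_of_pos (by norm_num)]
    exact (ENNReal.ofReal_lt_ofReal_iff (by linarith)).2 (by norm_num; linarith)
  set R : ℝ := (1 - δ) / δ with hR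
  have hR3 : 3 ≤ R := by rw [hR, le_div_iff₀ hδ0]; linarith
  have hlogR : 1 ≤ Real.log R := by
    rw [Real.le_log_iff_exp_le (by linarith)]
    linarith [Real.exp_one_lt_d9]
  set Lr := Fernique.logRatio c with hLr
  have hLreq : Lr = Real.log R / D := by rw [hLr, Fernique.logRatio, hcr, hc1r]
  have hLr0 : 0 ≤ Lr := by rw [hLreq]; positivity
  have : Fact (1 ≤ ((2 * p : ℕ) : ℝ≥0∞)) := ⟨by exact_mod_cast (by omega : 1 ≤ 2 * p)⟩
  set ν : Measure (PiLp ((2 * p : ℕ) : ℝ≥0∞) fun _ : Fin n => ℝ) :=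
    (vecLaw Z n).map (WithLp.toLp _) with hν
  have hto : Measurable (WithLp.toLp ((2 * p : ℕ) : ℝ≥0∞) :
    (Fin n → ℝ) → PiLp ((2 * p : ℕ) : ℝ≥0∞) fun _ : Fin n => ℝ) := by fun_prop
  have : IsProbabilityMeasure (vecLaw Z n) :=
    Measure.isProbabilityMeasure_map (measurable_evalVec hZ n).aemeasurable
  have : IsProbabilityMeasure ν := Measure.isProbabilityMeasure_map hto.aemeasurable
  have hrot := map_rotation_vecLaw hZ n ((2 * p : ℕ) : ℝ≥0∞) (-(Real.pi / 4))
  set a : ℝ := (n * M) ^ (1 / ((2 * p : ℕ) : ℝ)) with ha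
  have hnM : 0 < n * M := by positivity
  have ha0 : 0 < a := Real.rpow_pos_of_pos hnM _
  have h2p : ((2 * p : ℕ) : ℝ) ≠ 0 := by positivity
  have hap : a ^ (2 * p) = n * M := by
    rw [ha, ← Real.rpow_natCast, ← Real.rpow_mul hnM.le, one_div_mul_cancel h2p, Real.rpow_one]
  have hca : c ≤ ν {x | ‖x‖ ≤ a} := by
    refine (hKM n hn1').trans ?_
    rw [hν, Measure.map_apply hto (measurableSet_le measurable_norm measurable_const)]
    refine measure_mono fun x hx => ?_
    have hx' : ∑ i, x i ^ (2 * p) ≤ n * M := hx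
    rw [← norm_pow_toLp hp, ← hap] at hx'
    exact le_of_pow_le_pow_left₀ (by omega) ha0.le hx'
  have hfern := lintegral_exp_mul_sq_norm_le_of_map_rotation_eq_self hrot hca hcgt
  have hint : ∫⁻ x, ENNReal.ofReal (Real.exp (Lr * a⁻¹ ^ 2 * ‖x‖ ^ 2)) ∂ν
      ≤ ENNReal.ofReal (Real.exp Lr * (1 + S0.toReal)) := by
    refine hfern.trans ?_
    rw [mul_add, mul_one, ENNReal.ofReal_add (by positivity) (by positivity)]
    refine add_le_add le_rfl ?_
    calc ∑' k : ℕ, ENNReal.ofReal (Real.exp (-2⁻¹ * Real.log (c / (1 - c)).toReal * 2 ^ k))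
        ≤ S0 := ENNReal.tsum_le_tsum fun k => by
          refine ENNReal.ofReal_le_ofReal (Real.exp_le_exp.2 ?_)
          rw [ENNReal.toReal_div, hcr, hc1r]
          have : (0 : ℝ) < 2 ^ k := by positivity
          nlinarith
      _ = ENNReal.ofReal S0.toReal := (ENNReal.ofReal_toReal hS0fin.ne).symm
      _ ≤ ENNReal.ofReal (Real.exp Lr * S0.toReal) := by
          refine ENNReal.ofReal_le_ofReal ?_
          exact le_mul_of_one_le_left ENNReal.toReal_nonneg (Real.one_le_exp hLr0)
  have hτ0 : 0 < τ := lt_of_lt_of_le (by positivity) hτ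
  set T : ℝ := (τ / M) ^ (1 / (p : ℝ)) with hT
  have hT0T : T0 ≤ T := by
    have h1 : T0 ^ p ≤ τ / M := by rw [le_div_iff₀ hM0, mul_comm]; exact hτ
    have h2 := Real.rpow_le_rpow (by positivity) h1 (by positivity : (0 : ℝ) ≤ 1 / p)
    rwa [← Real.rpow_natCast, ← Real.rpow_mul (by positivity), mul_one_div_cancel hp'.ne',
      Real.rpow_one] at h2
  have hTp : T ^ p = τ / M := by
    rw [hT, ← Real.rpow_natCast, ← Real.rpow_mul (by positivity), one_div_mul_cancel hp'.ne',
      Real.rpow_one]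
  have hT00 : 0 < T := Real.rpow_pos_of_pos (by positivity) _
  have hBT : Bc * T = τ ^ (1 / (p : ℝ)) := by
    rw [hBc, hT, ← Real.mul_rpow hM0.le (by positivity), mul_div_cancel₀ _ hM0.ne']
  have hset : ∀ x : Fin n → ℝ, τ ≤ 1 / (n : ℝ) * ∑ i, x i ^ (2 * p) →
      T ≤ a⁻¹ ^ 2 * ‖(WithLp.toLp ((2 * p : ℕ) : ℝ≥0∞) x :
        PiLp ((2 * p : ℕ) : ℝ≥0∞) fun _ : Fin n => ℝ)‖ ^ 2 := by
    intro x hx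
    refine le_of_pow_le_pow_left₀ (n := p) (by omega) (by positivity) ?_
    rw [mul_pow, ← pow_mul, ← pow_mul, norm_pow_toLp hp, hTp, inv_pow, hap, div_le_iff₀ hM0]
    refine hx.trans (le_of_eq ?_)
    field_simp
  have hmark : vecLaw Z n {x | τ ≤ 1 / (n : ℝ) * ∑ i, x i ^ (2 * p)}
      ≤ ENNReal.ofReal (Real.exp Lr * (1 + S0.toReal)) / ENNReal.ofReal (Real.exp (Lr * T)) := by
    calc vecLaw Z n {x | τ ≤ 1 / (n : ℝ) * ∑ i, x i ^ (2 * p)}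
        ≤ vecLaw Z n (WithLp.toLp ((2 * p : ℕ) : ℝ≥0∞) ⁻¹'
          {y : PiLp ((2 * p : ℕ) : ℝ≥0∞) fun _ : Fin n => ℝ | ENNReal.ofReal (Real.exp (Lr * T))
            ≤ ENNReal.ofReal (Real.exp (Lr * a⁻¹ ^ 2 * ‖y‖ ^ 2))}) := by
          refine measure_mono fun x hx => ENNReal.ofReal_le_ofReal (Real.exp_le_exp.2 ?_)
          rw [mul_assoc]
          exact mul_le_mul_of_nonneg_left (hset x hx) hLr0
      _ = ν _ := (Measure.map_apply hto (measurableSet_le (by fun_prop) (by fun_prop))).symm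
      _ ≤ _ := (meas_ge_le_lintegral_div (by fun_prop) (by simp [Real.exp_pos])
          ENNReal.ofReal_ne_top).trans (ENNReal.div_le_div_right hint _)
  refine hmark.trans ?_
  rw [← ENNReal.ofReal_div_of_pos (Real.exp_pos _)]
  refine ENNReal.ofReal_le_ofReal ?_
  have hlr : 2 * Real.log R ≤ Lr * T / 4 := by
    rw [hLreq]
    have : 8 * D ≤ T := by linarith
    rw [div_mul_eq_mul_div, div_div, le_div_iff₀ (by positivity)]
    nlinarith
  have hexp : Lr - Lr * T ≤ -(2 * Real.log R) - c0 * τ ^ (1 / (p : ℝ)) := by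
    have h1 : c0 * τ ^ (1 / (p : ℝ)) ≤ Lr * T / 4 := by
      rw [← hBT]
      have h2 : 4 * c0 * Bc ≤ Lr := by rw [hLreq, hR]; exact hL
      nlinarith
    have h3 : 2 ≤ T := by linarith
    nlinarith
  have hRpow : Real.exp (-(2 * Real.log R)) ≤ 4 * K ^ 2 / (n : ℝ) ^ 2 :=
    (exp_neg_two_mul_log_odds_le hδ0 hδ4).trans_eq (by rw [hδ]; ring)
  calc Real.exp Lr * (1 + S0.toReal) / Real.exp (Lr * T)
      = (1 + S0.toReal) * Real.exp (Lr - Lr * T) := by rw [Real.exp_sub]; ring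
    _ ≤ (1 + S0.toReal) * (4 * K ^ 2 / (n : ℝ) ^ 2 * Real.exp (-c0 * τ ^ (1 / (p : ℝ)))) := by
        gcongr
        refine (Real.exp_le_exp.2 hexp).trans ?_
        rw [sub_eq_add_neg, Real.exp_add, neg_mul c0]
        exact mul_le_mul_of_nonneg_right hRpow (Real.exp_pos _).le
    _ = _ := by ring

lemma lintegral_gaussianReal_eq_scale {s : ℝ} (hs : 0 < s) {h : ℝ → ℝ≥0∞} (hh : Measurable h) :
    ∫⁻ x, h x ∂(gaussianReal 0 1)
      = ∫⁻ x, ENNReal.ofReal (s * Real.exp (-(s ^ 2 - 1) * x ^ 2 / 2)) * h (s * x)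
        ∂(gaussianReal 0 1) := by
  have hpdf := measurable_gaussianPDF 0 1
  rw [gaussianReal_of_var_ne_zero _ one_ne_zero,
    lintegral_withDensity_eq_lintegral_mul _ hpdf hh,
    lintegral_withDensity_eq_lintegral_mul _ hpdf (by fun_prop)]
  conv_lhs => rw [← Real.smul_map_volume_mul_left hs.ne']
  rw [lintegral_smul_measure, lintegral_map (by fun_prop) (by fun_prop), smul_eq_mul,
    ← lintegral_const_mul _ (by fun_prop)]
  refine lintegral_congr fun x => ?_
  simp only [Pi.mul_apply, ← mul_assoc]
  congr 1
  rw [gaussianPDF, gaussianPDF, ← ENNReal.ofReal_mul (by positivity), ←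
    ENNReal.ofReal_mul (gaussianPDFReal_nonneg _ _ _), abs_of_pos hs]
  congr 1
  have h1 : Real.exp (-(s * x) ^ 2 / 2)
      = Real.exp (-x ^ 2 / 2) * Real.exp (-(s ^ 2 - 1) * x ^ 2 / 2) := by
    rw [← Real.exp_add]
    congr 1
    ring
  simp only [gaussianPDFReal, sub_zero, NNReal.coe_one, mul_one, h1]
  ring

/-- Change of variables `ξ ↦ s ξ` for the standard Gaussian measure. -/
lemma lintegral_stdPi_eq_scale {n : ℕ} {s : ℝ} (hs : 0 < s) {H : (Fin n → ℝ) → ℝ≥0∞}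
    (hH : Measurable H) :
    ∫⁻ ξ, H ξ ∂(stdPi (Fin n))
      = ∫⁻ ξ, ENNReal.ofReal (s ^ n * Real.exp (-(s ^ 2 - 1) * (∑ i, ξ i ^ 2) / 2))
        * H (fun i => s * ξ i) ∂(stdPi (Fin n)) := by
  set w : ℝ → ℝ≥0∞ := fun x => ENNReal.ofReal (s * Real.exp (-(s ^ 2 - 1) * x ^ 2 / 2)) with hw
  have hwm : Measurable w := by fun_prop
  have hprod : ∀ ξ : Fin n → ℝ,
      ENNReal.ofReal (s ^ n * Real.exp (-(s ^ 2 - 1) * (∑ i, ξ i ^ 2) / 2)) = ∏ i, w (ξ i) := by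
    intro ξ
    rw [hw, ← ENNReal.ofReal_prod_of_nonneg fun i _ => by positivity, Finset.prod_mul_distrib,
      ← Real.exp_sum, ← Finset.sum_div, ← Finset.mul_sum]
    simp
  have key : stdPi (Fin n) = ((stdPi (Fin n)).withDensity fun ξ => ∏ i, w (ξ i)).map
      (fun ξ i => s * ξ i) := by
    refine Measure.pi_eq fun B hB => ?_
    rw [Measure.map_apply (by fun_prop) (MeasurableSet.univ_pi hB), withDensity_apply _
      ((MeasurableSet.univ_pi hB).preimage (by fun_prop)),
      ← lintegral_indicator ((MeasurableSet.univ_pi hB).preimage (by fun_prop))]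
    have h1 : ∀ ξ : Fin n → ℝ,
        ((fun (ξ : Fin n → ℝ) i => s * ξ i) ⁻¹' Set.univ.pi B).indicator
          (fun ξ => ∏ i, w (ξ i)) ξ
        = ∏ i, (w (ξ i) * (B i).indicator 1 (s * ξ i)) := by
      intro ξ
      by_cases hξ : ∀ i, s * ξ i ∈ B i
      · rw [Set.indicator_of_mem (by simpa [Set.mem_pi] using hξ)]
        refine Finset.prod_congr rfl fun i _ => ?_
        rw [Set.indicator_of_mem (hξ i), Pi.one_apply, mul_one]
      · rw [Set.indicator_of_notMem (by simpa [Set.mem_pi] using hξ)]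
        push Not at hξ
        obtain ⟨i, hi⟩ := hξ
        refine (Finset.prod_eq_zero (Finset.mem_univ i) ?_).symm
        rw [Set.indicator_of_notMem hi, mul_zero]
    have hBm : ∀ i, Measurable fun x : ℝ => w x * (B i).indicator (1 : ℝ → ℝ≥0∞) (s * x) :=
      fun i => hwm.mul ((measurable_one.indicator (hB i)).comp (measurable_const_mul s))
    have hind := iIndepFun_pi (μ := fun _ : Fin n => gaussianReal 0 1)
      (X := fun i x => w x * (B i).indicator (1 : ℝ → ℝ≥0∞) (s * x)) fun i => (hBm i).aemeasurable
    rw [lintegral_congr h1, lintegral_prod_eq_prod_lintegral_of_indepFun Finset.univ _ hind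
      fun i => (hBm i).comp (measurable_pi_apply i)]
    refine Finset.prod_congr rfl fun i _ => ?_
    rw [(measurePreserving_eval (fun _ : Fin n => gaussianReal 0 1) i).lintegral_comp (hBm i),
      ← lintegral_gaussianReal_eq_scale hs (measurable_one.indicator (hB i)),
      lintegral_indicator_one (hB i)]
  conv_lhs => rw [key]
  rw [lintegral_map hH (by fun_prop), lintegral_withDensity_eq_lintegral_mul _ (by fun_prop)
    (by fun_prop)]
  exact lintegral_congr fun ξ => by rw [hprod, Pi.mul_apply]

/-- A centered Gaussian law is dominated by its dilations. -/
lemma lintegral_vecLaw_le_scale [IsProbabilityMeasure (ℙ : Measure Ω)]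
    {Z : ℤ → Ω → ℝ} {r : ℤ → ℝ} (hZ : IsCSG Z r) (n : ℕ) {s : ℝ} (hs : 1 ≤ s)
    {H : (Fin n → ℝ) → ℝ≥0∞} (hH : Measurable H) :
    ∫⁻ x, H x ∂(vecLaw Z n)
      ≤ ENNReal.ofReal (s ^ n) * ∫⁻ x, H (fun i => s * x i) ∂(vecLaw Z n) := by
  obtain ⟨B, hB⟩ := exists_vecLaw_eq hZ n
  have hBm : Measurable fun (ξ : Fin n → ℝ) i => ∑ j, B i j * ξ j := by fun_prop
  rw [hB, lintegral_map hH hBm, lintegral_map (by fun_prop) hBm,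
    lintegral_stdPi_eq_scale (s := s) (by linarith) (by fun_prop),
    ← lintegral_const_mul _ (by fun_prop)]
  refine lintegral_mono fun ξ => ?_
  have h1 : (fun i => ∑ j, B i j * (s * ξ j)) = fun i => s * ∑ j, B i j * ξ j := by
    ext i
    rw [Finset.mul_sum]
    exact Finset.sum_congr rfl fun j _ => by ring
  rw [h1]
  gcongr
  refine mul_le_of_le_one_right (by positivity) (Real.exp_le_one_iff.2 ?_)
  have h2 : 0 ≤ ∑ i, ξ i ^ 2 := Finset.sum_nonneg fun i _ => sq_nonneg _
  have h3 : 1 ≤ s ^ 2 := one_le_pow₀ hs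
  nlinarith

/-- The empirical mean of `f` along the coordinates of a vector. -/
def vecAvg (f : ℝ → ℝ) {n : ℕ} (x : Fin n → ℝ) : ℝ := 1 / (n : ℝ) * ∑ i, f (x i)

lemma continuous_vecAvg {f : ℝ → ℝ} (hf : Continuous f) (n : ℕ) :
    Continuous (vecAvg f : (Fin n → ℝ) → ℝ) := by
  unfold vecAvg
  fun_prop

lemma injOn_of_sub_le_mul_deriv {φ φd : ℝ → ℝ} (hφ : ∀ s, HasDerivAt φ (φd s) s) {C : ℝ}
    (hC : ∀ s > 0, φ s - C ≤ s * φd s) : Set.InjOn φ {s | 0 < s ∧ C < φ s} := by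
  have hmono : MonotoneOn (fun s => (φ s - C) / s) (Set.Ioi 0) := by
    have hder : ∀ s > 0, HasDerivAt (fun s => (φ s - C) / s)
        ((φd s * s - (φ s - C) * 1) / s ^ 2) s := fun s hs =>
      ((hφ s).sub_const C).div (hasDerivAt_id s) (ne_of_gt hs)
    refine monotoneOn_of_deriv_nonneg (convex_Ioi 0)
      (fun s hs => (hder s hs).continuousAt.continuousWithinAt) ?_ ?_
    · rw [interior_Ioi]
      exact fun s hs => (hder s hs).differentiableAt.differentiableWithinAt
    · rw [interior_Ioi]
      intro s hs
      rw [(hder s hs).deriv]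
      have := hC s hs
      exact div_nonneg (by linarith) (sq_nonneg s)
  have hlt : ∀ a ∈ {s | 0 < s ∧ C < φ s}, ∀ b, a < b → φ a < φ b := by
    intro a ha b hab
    have h1 := hmono ha.1 (ha.1.trans hab) hab.le
    have hb := ha.1.trans hab
    simp only at h1
    rw [div_le_div_iff₀ ha.1 hb] at h1
    have h2 := ha.2
    have h3 : (φ a - C) * a < (φ b - C) * a := by nlinarith [ha.1]
    nlinarith [ha.1]
  intro a ha b hb hab
  rcases lt_trichotomy a b with h | h | h
  · exact absurd hab (hlt a ha b h).ne
  · exact h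
  · exact absurd hab (hlt b hb a h).ne'

/-- Change of variables `t = φ s` when `s φ' ≥ φ - C`. -/
lemma lintegral_comp_le_lintegral_image {φ φd : ℝ → ℝ} (hφ : ∀ s, HasDerivAt φ (φd s) s)
    {C A : ℝ} (hA : C + 2 ≤ A) (hC : ∀ s > 0, φ s - C ≤ s * φd s) (h : ℝ → ℝ≥0∞) {b : ℝ}
    (hb : b ≤ 2) :
    ∫⁻ s in Set.Icc 1 b ∩ {s | A < φ s}, h (φ s)
      ≤ ∫⁻ t in φ '' (Set.Icc 1 b ∩ {s | A < φ s}), h t := by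
  have hcont : Continuous φ := continuous_iff_continuousAt.2 fun s => (hφ s).continuousAt
  have hS : MeasurableSet (Set.Icc 1 b ∩ {s | A < φ s}) :=
    measurableSet_Icc.inter (measurableSet_lt measurable_const hcont.measurable)
  rw [lintegral_image_eq_lintegral_abs_deriv_mul hS (fun s _ => (hφ s).hasDerivWithinAt)
    ((injOn_of_sub_le_mul_deriv hφ hC).mono fun s hs => ?_)]
  · refine setLIntegral_mono' hS fun s hs => ?_
    refine le_mul_of_one_le_left' ?_
    rw [← ENNReal.ofReal_one]
    refine ENNReal.ofReal_le_ofReal ((?_ : (1 : ℝ) ≤ φd s).trans (le_abs_self _))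
    have h1 := hC s (by linarith [hs.1.1])
    have h2 : A < φ s := hs.2
    have h3 := hs.1.1
    have h4 := hs.1.2.trans hb
    by_contra! h5
    nlinarith
  · have h2 : A < φ s := hs.2
    exact ⟨by linarith [hs.1.1], by linarith⟩

/-- Radial derivative of the empirical mean of an even polynomial with positive leading
coefficient. -/
lemma exists_deriv_vecAvg_smul (c : ℕ → ℝ) {p : ℕ} (hp : 1 ≤ p) (hc : 0 < c p) :
    ∃ C > 0, ∀ (n : ℕ) (x : Fin n → ℝ), ∃ φd : ℝ → ℝ,
      (∀ s, HasDerivAt (fun s => vecAvg (evenPoly c p) fun i => s * x i) (φd s) s) ∧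
      (∀ s, s * φd s = vecAvg (evenPoly (fun k => 2 * k * c k) p) fun i => s * x i) ∧
      ∀ s, vecAvg (evenPoly c p) (fun i => s * x i) - C ≤ s * φd s := by
  choose f' hf' hxf' using exists_deriv_evenPoly c p
  have hp' : (1 : ℝ) ≤ p := by exact_mod_cast hp
  obtain ⟨C, hC0, hC⟩ := exists_le_evenPoly (c := fun k => 2 * k * c k - c k) (p := p)
    (by nlinarith)
  refine ⟨C, hC0, fun n x => ⟨fun s => 1 / (n : ℝ) * ∑ i, f' (s * x i) * x i, fun s => ?_,
    fun s => ?_, fun s => ?_⟩⟩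
  · refine HasDerivAt.const_mul _ (HasDerivAt.fun_sum fun i _ => ?_)
    exact (hf' (s * x i)).comp s (by simpa using (hasDerivAt_id s).mul_const (x i))
  · simp only [vecAvg, ← hxf', Finset.mul_sum]
    exact Finset.sum_congr rfl fun i _ => by ring
  · have h1 : s * (1 / (n : ℝ) * ∑ i, f' (s * x i) * x i)
        = vecAvg (evenPoly (fun k => 2 * k * c k) p) fun i => s * x i := by
      simp only [vecAvg, ← hxf', Finset.mul_sum]
      exact Finset.sum_congr rfl fun i _ => by ring
    have h2 : ∀ y, evenPoly c p y - C ≤ evenPoly (fun k => 2 * k * c k) p y := by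
      intro y
      have h3 := hC y
      have h4 : evenPoly (fun k => 2 * k * c k - c k) p y
          = evenPoly (fun k => 2 * k * c k) p y - evenPoly c p y := by
        simp only [evenPoly, ← Finset.sum_sub_distrib]
        exact Finset.sum_congr rfl fun k _ => by ring
      have h5 : 0 ≤ (2 * (p : ℝ) * c p - c p) / 2 * y ^ (2 * p) :=
        mul_nonneg (by nlinarith) ((even_two_mul p).pow_nonneg _)
      linarith
    rw [h1]
    rcases Nat.eq_zero_or_pos n with rfl | hn
    · simp [vecAvg, hC0.le]
    have hn' : (0 : ℝ) < n := by exact_mod_cast hn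
    have h6 : ∑ i, (evenPoly c p (s * x i) - C)
        ≤ ∑ i, evenPoly (fun k => 2 * k * c k) p (s * x i) :=
      Finset.sum_le_sum fun i _ => h2 _
    rw [Finset.sum_sub_distrib, Finset.sum_const, Finset.card_univ, Fintype.card_fin,
      nsmul_eq_mul] at h6
    have h7 := mul_le_mul_of_nonneg_left h6 (by positivity : 0 ≤ 1 / (n : ℝ))
    rw [mul_sub, ← mul_assoc, one_div_mul_cancel hn'.ne', one_mul] at h7
    exact h7

lemma vecAvg_le_of_le {f g : ℝ → ℝ} {n : ℕ} (hfg : ∀ y, f y ≤ g y) (x : Fin n → ℝ) :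
    vecAvg f x ≤ vecAvg g x :=
  mul_le_mul_of_nonneg_left (Finset.sum_le_sum fun i _ => hfg (x i)) (by positivity)

lemma vecAvg_affine {n : ℕ} (hn : 1 ≤ n) (a b : ℝ) (f : ℝ → ℝ) (x : Fin n → ℝ) :
    vecAvg (fun y => a + b * f y) x = a + b * vecAvg f x := by
  have hn' : (n : ℝ) ≠ 0 := by positivity
  simp only [vecAvg, Finset.sum_add_distrib, Finset.sum_const, Finset.card_univ, Fintype.card_fin,
    nsmul_eq_mul, ← Finset.mul_sum]
  field_simp

lemma vecAvg_pow_smul {n : ℕ} (m : ℕ) (s : ℝ) (x : Fin n → ℝ) :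
    vecAvg (fun y => y ^ m) (fun i => s * x i) = s ^ m * vecAvg (fun y => y ^ m) x := by
  simp only [vecAvg, mul_pow, ← Finset.mul_sum]
  ring

/-- Averaging over dilations: an upper bound for the law of an empirical mean by the tail
function of the empirical moment. -/
lemma exists_setLIntegral_vecAvg_le [IsProbabilityMeasure (ℙ : Measure Ω)]
    {Z : ℤ → Ω → ℝ} {r : ℤ → ℝ} (hZ : IsCSG Z r) (c : ℕ → ℝ) {p : ℕ} (hp : 1 ≤ p)
    (hc : 0 < c p) :
    ∃ A0, ∃ C > 0, ∀ A ≥ A0, ∀ n : ℕ, 1 ≤ n → ∀ h : ℝ → ℝ≥0∞, Measurable h →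
      ∫⁻ x in {x | A < vecAvg (evenPoly c p) x}, h (vecAvg (evenPoly c p) x) ∂(vecLaw Z n)
        ≤ ENNReal.ofReal (3 * n) * ∫⁻ t in Set.Ioi A,
          h t * vecLaw Z n {x | t / C ≤ vecAvg (fun y => y ^ (2 * p)) x} := by
  obtain ⟨C0, -, hC0⟩ := exists_deriv_vecAvg_smul c hp hc
  obtain ⟨C1, hC1, hf⟩ := exists_abs_evenPoly_le c p
  refine ⟨max (C0 + 2) (2 * C1), 2 * C1 * 2 ^ (2 * p), by positivity, fun A hA n hn h hh => ?_⟩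
  have hA0 : C0 + 2 ≤ A := (le_max_left _ _).trans hA
  have hA1 : 2 * C1 ≤ A := (le_max_right _ _).trans hA
  have hn0 : (0 : ℝ) < n := by exact_mod_cast hn
  have hn1 : (1 : ℝ) ≤ n := by exact_mod_cast hn
  set f := evenPoly c p with hfdef
  have hfc : Continuous f := continuous_evenPoly c p
  have hFm : Measurable (vecAvg f : (Fin n → ℝ) → ℝ) := (continuous_vecAvg hfc n).measurable
  have hGm : Measurable (vecAvg (fun y => y ^ (2 * p)) : (Fin n → ℝ) → ℝ) :=
    (continuous_vecAvg (by fun_prop) n).measurable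
  have : IsProbabilityMeasure (vecLaw Z n) :=
    Measure.isProbabilityMeasure_map (measurable_evalVec hZ n).aemeasurable
  set b : ℝ := 1 + 1 / n with hb
  have hb2 : b ≤ 2 := by
    have : 1 / (n : ℝ) ≤ 1 := by rw [div_le_one hn0]; exact hn1
    linarith
  set H : (Fin n → ℝ) → ℝ≥0∞ := fun x => (Set.Ioi A).indicator h (vecAvg f x) with hH
  have hHm : Measurable H := (hh.indicator measurableSet_Ioi).comp hFm
  have hLHS : ∫⁻ x in {x | A < vecAvg f x}, h (vecAvg f x) ∂(vecLaw Z n)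
      = ∫⁻ x, H x ∂(vecLaw Z n) := by
    rw [← lintegral_indicator (measurableSet_lt measurable_const hFm)]
    rfl
  have hstep : ∀ s ∈ Set.Icc 1 b, ∫⁻ x, H x ∂(vecLaw Z n)
      ≤ ENNReal.ofReal 3 * ∫⁻ x, H (fun i => s * x i) ∂(vecLaw Z n) := by
    intro s hs
    refine (lintegral_vecLaw_le_scale hZ n hs.1 hHm).trans ?_
    gcongr
    calc s ^ n ≤ b ^ n := pow_le_pow_left₀ (by linarith [hs.1]) hs.2 n
      _ ≤ Real.exp (1 / n) ^ n := by
          refine pow_le_pow_left₀ (by positivity) ?_ n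
          rw [hb, add_comm]
          exact Real.add_one_le_exp _
      _ = Real.exp 1 := by
          rw [← Real.exp_nat_mul, mul_one_div_cancel hn0.ne']
      _ ≤ 3 := by linarith [Real.exp_one_lt_d9]
  have hjoint : Measurable fun q : ℝ × (Fin n → ℝ) => H fun i => q.1 * q.2 i := by
    refine hHm.comp ?_
    fun_prop
  have hvol : volume (Set.Icc 1 b) = ENNReal.ofReal (1 / n) := by
    rw [Real.volume_Icc, hb]
    congr 1
    ring
  have hinner : ∀ x : Fin n → ℝ, ∫⁻ s in Set.Icc 1 b, H (fun i => s * x i)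
      ≤ ∫⁻ t in Set.Ioi A, h t * {x | t / (2 * C1 * 2 ^ (2 * p))
        ≤ vecAvg (fun y => y ^ (2 * p)) x}.indicator 1 x := by
    intro x
    obtain ⟨φd, hφd, -, hφC⟩ := hC0 n x
    set ψ : ℝ → ℝ := fun s => vecAvg f fun i => s * x i with hψ
    have hψm : Measurable ψ := hFm.comp (by fun_prop)
    have h1 : ∫⁻ s in Set.Icc 1 b, H (fun i => s * x i)
        = ∫⁻ s in Set.Icc 1 b ∩ {s | A < ψ s}, h (ψ s) := by
      rw [Set.inter_comm, ← Measure.restrict_restrict (measurableSet_lt measurable_const hψm),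
        ← lintegral_indicator (measurableSet_lt measurable_const hψm)]
      rfl
    rw [h1]
    refine (lintegral_comp_le_lintegral_image hφd hA0 (fun s _ => hφC s) h hb2).trans ?_
    have himg : ψ '' (Set.Icc 1 b ∩ {s | A < ψ s}) ⊆ Set.Ioi A ∩ {t | t / (2 * C1 * 2 ^ (2 * p))
        ≤ vecAvg (fun y => y ^ (2 * p)) x} := by
      rintro _ ⟨s, ⟨hs, hsA⟩, rfl⟩
      refine ⟨hsA, ?_⟩
      have hsA' : A < ψ s := hsA
      have h2 : ψ s ≤ C1 + C1 * (s ^ (2 * p) * vecAvg (fun y => y ^ (2 * p)) x) := by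
        rw [← vecAvg_pow_smul, ← vecAvg_affine hn]
        refine vecAvg_le_of_le (fun y => ?_) _
        exact (le_abs_self _).trans ((hf y).trans_eq (by ring))
      have hG0 : 0 ≤ vecAvg (fun y => y ^ (2 * p)) x :=
        mul_nonneg (by positivity) (Finset.sum_nonneg fun i _ => (even_two_mul p).pow_nonneg _)
      have h3 : s ^ (2 * p) ≤ 2 ^ (2 * p) :=
        pow_le_pow_left₀ (by linarith [hs.1]) (hs.2.trans hb2) _
      have h4 : C1 * (s ^ (2 * p) * vecAvg (fun y => y ^ (2 * p)) x)
          ≤ C1 * (2 ^ (2 * p) * vecAvg (fun y => y ^ (2 * p)) x) := by gcongr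
      show ψ s / _ ≤ _
      rw [div_le_iff₀ (by positivity)]
      linarith
    refine (lintegral_mono_set himg).trans (le_of_eq ?_)
    have hm2 : MeasurableSet {t : ℝ | t / (2 * C1 * 2 ^ (2 * p))
        ≤ vecAvg (fun y => y ^ (2 * p)) x} := measurableSet_le (by fun_prop) measurable_const
    rw [Set.inter_comm, ← Measure.restrict_restrict hm2, ← lintegral_indicator hm2]
    refine lintegral_congr fun t => ?_
    by_cases ht : t / (2 * C1 * 2 ^ (2 * p)) ≤ vecAvg (fun y => y ^ (2 * p)) x
    · rw [Set.indicator_of_mem (by exact ht), Set.indicator_of_mem (by exact ht), Pi.one_apply,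
        mul_one]
    · rw [Set.indicator_of_notMem (by exact ht), Set.indicator_of_notMem (by exact ht), mul_zero]
  have hmt : Measurable fun q : (Fin n → ℝ) × ℝ => h q.2 * {x | q.2 / (2 * C1 * 2 ^ (2 * p))
        ≤ vecAvg (fun y => y ^ (2 * p)) x}.indicator (1 : (Fin n → ℝ) → ℝ≥0∞) q.1 := by
    refine (hh.comp measurable_snd).mul ?_
    have hms : MeasurableSet {q : (Fin n → ℝ) × ℝ | q.2 / (2 * C1 * 2 ^ (2 * p))
        ≤ vecAvg (fun y => y ^ (2 * p)) q.1} :=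
      measurableSet_le (by fun_prop) (hGm.comp measurable_fst)
    exact measurable_one.indicator hms
  have key : ENNReal.ofReal (1 / n) * ∫⁻ x, H x ∂(vecLaw Z n)
      ≤ ENNReal.ofReal 3 * ∫⁻ t in Set.Ioi A,
        h t * vecLaw Z n {x | t / (2 * C1 * 2 ^ (2 * p)) ≤ vecAvg (fun y => y ^ (2 * p)) x} := by
    calc ENNReal.ofReal (1 / n) * ∫⁻ x, H x ∂(vecLaw Z n)
        = ∫⁻ s in Set.Icc 1 b, (∫⁻ x, H x ∂(vecLaw Z n)) := by
          rw [lintegral_const, Measure.restrict_apply_univ, hvol, mul_comm]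
      _ ≤ ∫⁻ s in Set.Icc 1 b, ENNReal.ofReal 3 * ∫⁻ x, H (fun i => s * x i) ∂(vecLaw Z n) :=
          setLIntegral_mono' measurableSet_Icc hstep
      _ = ENNReal.ofReal 3 *
          ∫⁻ s in Set.Icc 1 b, (∫⁻ x, H (fun i => s * x i) ∂(vecLaw Z n)) :=
          lintegral_const_mul _ hjoint.lintegral_prod_right'
      _ = ENNReal.ofReal 3 * ∫⁻ x, (∫⁻ s in Set.Icc 1 b, H (fun i => s * x i)) ∂(vecLaw Z n) := by
          rw [lintegral_lintegral_swap hjoint.aemeasurable]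
      _ ≤ ENNReal.ofReal 3 * ∫⁻ x, (∫⁻ t in Set.Ioi A, h t * {x | t / (2 * C1 * 2 ^ (2 * p))
            ≤ vecAvg (fun y => y ^ (2 * p)) x}.indicator 1 x) ∂(vecLaw Z n) := by
          exact mul_le_mul_right (lintegral_mono hinner) _
      _ = _ := by
          rw [lintegral_lintegral_swap hmt.aemeasurable]
          congr 1
          refine lintegral_congr fun t => ?_
          have hms : MeasurableSet {x : Fin n → ℝ | t / (2 * C1 * 2 ^ (2 * p))
            ≤ vecAvg (fun y => y ^ (2 * p)) x} := measurableSet_le measurable_const hGm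
          rw [lintegral_const_mul _ (measurable_one.indicator hms), lintegral_indicator_one hms]
  rw [hLHS]
  have hnn : ENNReal.ofReal n * ENNReal.ofReal (1 / n) = 1 := by
    rw [← ENNReal.ofReal_mul hn0.le, mul_one_div_cancel hn0.ne', ENNReal.ofReal_one]
  calc ∫⁻ x, H x ∂(vecLaw Z n)
      = ENNReal.ofReal n * (ENNReal.ofReal (1 / n) * ∫⁻ x, H x ∂(vecLaw Z n)) := by
        rw [← mul_assoc, hnn, one_mul]
    _ ≤ _ := by
        rw [mul_comm 3, ENNReal.ofReal_mul hn0.le, mul_assoc]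
        gcongr

/-- Beyond a threshold, expectations of functions of the empirical mean are `O(1/n)`, as soon as
the function is integrable with respect to a suitable stretched-exponential weight. -/
lemma exists_setLIntegral_vecAvg_le_div [IsProbabilityMeasure (ℙ : Measure Ω)]
    {Z : ℤ → Ω → ℝ} {r : ℤ → ℝ} (hZ : IsCSG Z r) (hsum : Summable fun j : ℤ => (r j) ^ 2)
    (c : ℕ → ℝ) {p : ℕ} (hp : 1 ≤ p) (hc : 0 < c p) :
    ∃ A0, ∀ A ≥ A0, ∀ c0 > 0, ∃ n1 : ℕ, ∃ C > 0, ∀ n ≥ n1, ∀ h : ℝ → ℝ≥0∞, Measurable h →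
      ∫⁻ x in {x | A < vecAvg (evenPoly c p) x}, h (vecAvg (evenPoly c p) x) ∂(vecLaw Z n)
        ≤ ENNReal.ofReal (C / n) * ∫⁻ t in Set.Ioi A,
          h t * ENNReal.ofReal (Real.exp (-c0 * t ^ (1 / (p : ℝ)))) := by
  obtain ⟨A1, C1, hC1, h1⟩ := exists_setLIntegral_vecAvg_le hZ c hp hc
  obtain ⟨A2, hA2, h2⟩ := vecLaw_empirical_moment_tail hZ hsum hp
  refine ⟨max A1 (A2 * C1), fun A hA c0 hc0 => ?_⟩
  have hw : 0 < C1 ^ (1 / (p : ℝ)) := Real.rpow_pos_of_pos hC1 _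
  obtain ⟨n1, hn1, C2, hC2, h3⟩ := h2 (c0 * C1 ^ (1 / (p : ℝ))) (by positivity)
  refine ⟨n1, 3 * C2, by positivity, fun n hn h hh => ?_⟩
  have hn0 : (0 : ℝ) < n := by exact_mod_cast hn1.trans hn
  refine (h1 A ((le_max_left _ _).trans hA) n (hn1.trans hn) h hh).trans ?_
  have hb : ∀ t ∈ Set.Ioi A, h t * vecLaw Z n {x | t / C1 ≤ vecAvg (fun y => y ^ (2 * p)) x}
      ≤ ENNReal.ofReal (C2 / n ^ 2) *
        (h t * ENNReal.ofReal (Real.exp (-c0 * t ^ (1 / (p : ℝ))))) := by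
    intro t ht
    have ht1 : A2 ≤ t / C1 := by
      rw [le_div_iff₀ hC1]
      exact ((le_max_right _ _).trans hA).trans (le_of_lt ht)
    have ht0 : 0 < t / C1 := hA2.trans_le ht1
    have h4 := h3 n hn (t / C1) ht1
    have h5 : c0 * C1 ^ (1 / (p : ℝ)) * (t / C1) ^ (1 / (p : ℝ)) = c0 * t ^ (1 / (p : ℝ)) := by
      rw [mul_assoc, ← Real.mul_rpow hC1.le ht0.le, mul_div_cancel₀ _ hC1.ne']
    rw [neg_mul, h5, ← neg_mul, ENNReal.ofReal_mul (by positivity)] at h4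
    calc _ ≤ h t * (ENNReal.ofReal (C2 / n ^ 2) *
          ENNReal.ofReal (Real.exp (-c0 * t ^ (1 / (p : ℝ))))) := by
          gcongr
          exact h4
      _ = _ := by ring
  calc _ ≤ ENNReal.ofReal (3 * n) * ∫⁻ t in Set.Ioi A, ENNReal.ofReal (C2 / n ^ 2) *
        (h t * ENNReal.ofReal (Real.exp (-c0 * t ^ (1 / (p : ℝ))))) := by
        exact mul_le_mul_right (setLIntegral_mono' measurableSet_Ioi hb) _
    _ = _ := by
        rw [lintegral_const_mul _ (by fun_prop), ← mul_assoc, ← ENNReal.ofReal_mul (by positivity)]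
        congr 2
        field_simp

lemma vecAvg_pow_pos {n m : ℕ} (x : Fin n → ℝ) {i : Fin n} (hi : x i ≠ 0) :
    0 < vecAvg (fun y => y ^ (2 * m)) x := by
  have hn : (0 : ℝ) < n := by exact_mod_cast i.pos
  refine mul_pos (by positivity) (Finset.sum_pos' (fun j _ => (even_two_mul m).pow_nonneg _)
    ⟨i, Finset.mem_univ i, (even_two_mul m).pow_pos hi⟩)

/-- Along a ray, the empirical mean of an even polynomial sweeps a half-line with a density which
is bounded below by a stretched exponential. -/
lemma exists_setLIntegral_lt_top_of_ray (c : ℕ → ℝ) {p : ℕ} (hp : 1 ≤ p) (hc : 0 < c p) {n : ℕ}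
    (x : Fin n → ℝ) {i : Fin n} (hi : x i ≠ 0) {κ : ℝ} (hκ : 0 ≤ κ) {h : ℝ → ℝ≥0∞}
    (hfin : ∫⁻ s in Set.Ioi 1, ENNReal.ofReal (Real.exp (-κ * s ^ 2)) *
      h (vecAvg (evenPoly c p) fun i => s * x i) < ∞) :
    ∃ c0 > 0, ∃ A0, ∫⁻ t in Set.Ioi A0,
      h t * ENNReal.ofReal (Real.exp (-c0 * t ^ (1 / (p : ℝ)))) < ∞ := by
  obtain ⟨C, hC, hder⟩ := exists_deriv_vecAvg_smul c hp hc
  obtain ⟨C1, hC1, hf1⟩ := exists_abs_evenPoly_le (fun k => 2 * k * c k) p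
  obtain ⟨C2, hC2, hf2⟩ := exists_le_evenPoly hc
  obtain ⟨φd, hφd, hφe, hφC⟩ := hder n x
  have hn : 1 ≤ n := i.pos
  have hp0 : (0 : ℝ) < p := by exact_mod_cast hp
  set φ : ℝ → ℝ := fun s => vecAvg (evenPoly c p) fun i => s * x i with hφ
  set G := vecAvg (fun y => y ^ (2 * p)) x with hG
  have hG0 : 0 < G := vecAvg_pow_pos x hi
  have hlow : ∀ s, c p / 2 * G * s ^ (2 * p) - C2 ≤ φ s := by
    intro s
    have h1 : vecAvg (fun y => -C2 + c p / 2 * y ^ (2 * p)) (fun i => s * x i) ≤ φ s :=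
      vecAvg_le_of_le (fun y => by have := hf2 y; linarith) _
    rw [vecAvg_affine hn, vecAvg_pow_smul] at h1
    linarith
  have hdb : ∀ s, 1 ≤ s → |φd s| ≤ C1 * (1 + G) * s ^ (2 * p) := by
    intro s hs
    have h1 : |s * φd s| ≤ C1 + C1 * (s ^ (2 * p) * G) := by
      rw [hφe, ← vecAvg_pow_smul, ← vecAvg_affine hn, vecAvg, abs_mul,
        abs_of_nonneg (by positivity : 0 ≤ 1 / (n : ℝ))]
      refine mul_le_mul_of_nonneg_left ((Finset.abs_sum_le_sum_abs _ _).trans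
        (Finset.sum_le_sum fun i _ => (hf1 _).trans_eq (by ring))) (by positivity)
    have h2 : |φd s| ≤ |s * φd s| := by
      rw [abs_mul]
      exact le_mul_of_one_le_left (abs_nonneg _) (hs.trans (le_abs_self s))
    have h3 : C1 ≤ C1 * s ^ (2 * p) := le_mul_of_one_le_right hC1.le (one_le_pow₀ hs)
    linarith
  have hφc : Continuous φ := continuous_iff_continuousAt.2 fun s => (hφd s).continuousAt
  set β : ℝ := (c p * G / 4) ^ (1 / (p : ℝ)) with hβ
  have hβ0 : 0 < β := Real.rpow_pos_of_pos (by positivity) _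
  set A0 := max (max C C2) (φ 1) with hA0
  have hA0C : C ≤ A0 := (le_max_left _ _).trans (le_max_left _ _)
  have hA0C2 : C2 ≤ A0 := (le_max_right _ _).trans (le_max_left _ _)
  have hA0φ : φ 1 ≤ A0 := le_max_right _ _
  set S : Set ℝ := Set.Ioi 1 ∩ {s | A0 < φ s} with hS
  have hSm : MeasurableSet S :=
    measurableSet_Ioi.inter (measurableSet_lt measurable_const hφc.measurable)
  have himg : Set.Ioi A0 ⊆ φ '' S := by
    intro t ht
    have ht' : A0 < t := ht
    set b := max 1 ((t + C2) / (c p / 2 * G)) with hb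
    have hb1 : 1 ≤ b := le_max_left _ _
    have htb : t ≤ φ b := by
      have h1 : (t + C2) / (c p / 2 * G) ≤ b := le_max_right _ _
      rw [div_le_iff₀ (by positivity)] at h1
      have h2 : b ≤ b ^ (2 * p) := le_self_pow₀ hb1 (by omega)
      have h3 : c p / 2 * G * b ≤ c p / 2 * G * b ^ (2 * p) := by gcongr
      linarith [hlow b]
    obtain ⟨s, hs, rfl⟩ := intermediate_value_Icc hb1 hφc.continuousOn
      (⟨hA0φ.trans ht'.le, htb⟩ : t ∈ Set.Icc (φ 1) (φ b))
    refine ⟨s, ⟨lt_of_le_of_ne hs.1 ?_, ht'⟩, rfl⟩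
    rintro rfl
    linarith
  refine ⟨(κ + 1) / β, by positivity, A0, ?_⟩
  set W : ℝ → ℝ≥0∞ := fun t =>
    h t * ENNReal.ofReal (Real.exp (-((κ + 1) / β) * t ^ (1 / (p : ℝ)))) with hW
  have hSsub : S ⊆ {s | 0 < s ∧ C < φ s} := fun s hs =>
    ⟨one_pos.trans (show (1 : ℝ) < s from hs.1), hA0C.trans_lt hs.2⟩
  have hinj : Set.InjOn φ S := (injOn_of_sub_le_mul_deriv hφd fun s _ => hφC s).mono hSsub
  calc ∫⁻ t in Set.Ioi A0, W t ≤ ∫⁻ t in φ '' S, W t := lintegral_mono_set himg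
    _ = ∫⁻ s in S, ENNReal.ofReal |φd s| * W (φ s) :=
        lintegral_image_eq_lintegral_abs_deriv_mul hSm (fun s _ => (hφd s).hasDerivWithinAt) hinj W
    _ ≤ ∫⁻ s in S, ENNReal.ofReal (C1 * (1 + G) * p.factorial) *
          (ENNReal.ofReal (Real.exp (-κ * s ^ 2)) * h (φ s)) := by
        refine setLIntegral_mono' hSm fun s hs => ?_
        have hs1 : 1 < s := hs.1
        have hsA : A0 < φ s := hs.2
        have hkey : |φd s| * Real.exp (-((κ + 1) / β) * φ s ^ (1 / (p : ℝ)))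
            ≤ C1 * (1 + G) * p.factorial * Real.exp (-κ * s ^ 2) := by
          have h1 : β * s ^ 2 ≤ φ s ^ (1 / (p : ℝ)) := by
            have h2 : c p * G / 4 * s ^ (2 * p) ≤ φ s := by linarith [hlow s]
            have h3 := Real.rpow_le_rpow (by positivity) h2 (by positivity : 0 ≤ 1 / (p : ℝ))
            rwa [Real.mul_rpow (by positivity) (by positivity), pow_mul, ← Real.rpow_natCast _ p,
              ← Real.rpow_mul (by positivity), mul_one_div_cancel hp0.ne', Real.rpow_one] at h3
          have h4 : -((κ + 1) / β) * φ s ^ (1 / (p : ℝ)) ≤ -κ * s ^ 2 - s ^ 2 := by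
            have h5 : (κ + 1) / β * (β * s ^ 2) ≤ (κ + 1) / β * φ s ^ (1 / (p : ℝ)) := by gcongr
            have h6 : (κ + 1) / β * (β * s ^ 2) = (κ + 1) * s ^ 2 := by field_simp
            linarith
          have h7 : s ^ (2 * p) ≤ p.factorial * Real.exp (s ^ 2) := by
            have h8 := Real.pow_div_factorial_le_exp (s ^ 2) (sq_nonneg s) p
            rw [div_le_iff₀ (by positivity)] at h8
            rw [pow_mul]
            linarith
          calc |φd s| * Real.exp (-((κ + 1) / β) * φ s ^ (1 / (p : ℝ)))
              ≤ C1 * (1 + G) * (p.factorial * Real.exp (s ^ 2)) *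
                Real.exp (-κ * s ^ 2 - s ^ 2) := by
                refine mul_le_mul ((hdb s hs1.le).trans ?_) (Real.exp_le_exp.2 h4)
                  (Real.exp_pos _).le (by positivity)
                gcongr
            _ = C1 * (1 + G) * p.factorial * (Real.exp (s ^ 2) *
                Real.exp (-κ * s ^ 2 - s ^ 2)) := by ring
            _ = _ := by
                rw [← Real.exp_add]
                congr 2
                ring
        calc ENNReal.ofReal |φd s| * W (φ s)
            = ENNReal.ofReal (|φd s| * Real.exp (-((κ + 1) / β) * φ s ^ (1 / (p : ℝ))))
              * h (φ s) := by
              rw [ENNReal.ofReal_mul (abs_nonneg _), hW]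
              ring
          _ ≤ ENNReal.ofReal (C1 * (1 + G) * p.factorial * Real.exp (-κ * s ^ 2)) * h (φ s) := by
              gcongr
          _ = _ := by rw [ENNReal.ofReal_mul (by positivity), mul_assoc]
    _ ≤ ∫⁻ s in Set.Ioi 1, ENNReal.ofReal (C1 * (1 + G) * p.factorial) *
          (ENNReal.ofReal (Real.exp (-κ * s ^ 2)) * h (φ s)) :=
        lintegral_mono_set Set.inter_subset_left
    _ < ∞ := by
        rw [lintegral_const_mul' _ _ ENNReal.ofReal_ne_top]
        exact ENNReal.mul_lt_top ENNReal.ofReal_lt_top hfin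

lemma exp_weight_le (n : ℕ) {a b s : ℝ} (ha0 : 0 ≤ a) (hs1 : 1 ≤ s) (hb : a = b / 2) :
    Real.exp (-(a + 1) * s ^ 2)
      ≤ Real.exp (-s) * (s ^ n * Real.exp (-(s ^ 2 - 1) * b / 2)) := by
  calc Real.exp (-(a + 1) * s ^ 2) ≤ Real.exp (-s + -(s ^ 2 - 1) * b / 2) := by
        refine Real.exp_le_exp.2 ?_
        subst hb
        nlinarith
    _ = Real.exp (-s) * Real.exp (-(s ^ 2 - 1) * b / 2) := Real.exp_add _ _
    _ ≤ _ := by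
        gcongr
        exact le_mul_of_one_le_left (Real.exp_pos _).le (one_le_pow₀ hs1)

/-- If `h` of the empirical mean has a finite expectation, then `h` is integrable with respect to
a stretched-exponential weight. -/
lemma exists_setLIntegral_lt_top [IsProbabilityMeasure (ℙ : Measure Ω)]
    {Z : ℤ → Ω → ℝ} {r : ℤ → ℝ} (hZ : IsCSG Z r) (c : ℕ → ℝ) {p : ℕ} (hp : 1 ≤ p) (hc : 0 < c p)
    {n : ℕ} (hn : 1 ≤ n) {h : ℝ → ℝ≥0∞} (hh : Measurable h)
    (hfin : ∫⁻ x, h (vecAvg (evenPoly c p) x) ∂(vecLaw Z n) < ∞) :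
    ∃ c0 > 0, ∃ A0, ∫⁻ t in Set.Ioi A0,
      h t * ENNReal.ofReal (Real.exp (-c0 * t ^ (1 / (p : ℝ)))) < ∞ := by
  obtain ⟨B, hB⟩ := exists_vecLaw_eq hZ n
  have hBm : Measurable fun (ξ : Fin n → ℝ) i => ∑ j, B i j * ξ j := by fun_prop
  have hFm : Measurable (vecAvg (evenPoly c p) : (Fin n → ℝ) → ℝ) :=
    (continuous_vecAvg (continuous_evenPoly c p) n).measurable
  set H : (Fin n → ℝ) → ℝ≥0∞ := fun ξ => h (vecAvg (evenPoly c p) fun i => ∑ j, B i j * ξ j)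
    with hH
  have hHm : Measurable H := hh.comp (hFm.comp hBm)
  have hHfin : ∫⁻ ξ, H ξ ∂(stdPi (Fin n)) < ∞ := by
    rwa [hB, lintegral_map (f := fun x => h (vecAvg (evenPoly c p) x)) (hh.comp hFm) hBm] at hfin
  let i0 : Fin n := ⟨0, hn⟩
  have hne : ∀ᵐ ξ ∂(stdPi (Fin n)), ∑ j, B i0 j * ξ j ≠ 0 := by
    have h1 : ∀ᵐ y ∂(gaussianReal 0 (r 0).toNNReal), y ≠ 0 := by
      have h2 : (r 0).toNNReal ≠ 0 := by
        simpa using hZ.2.2.2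
      have := nullSingletonClass_gaussianReal (μ := 0) h2
      rw [ae_iff]
      simp
    have h3 : ∀ᵐ ω ∂(ℙ : Measure Ω), Z 0 ω ≠ 0 := by
      rw [← csg_map_single hZ 0] at h1
      exact ae_of_ae_map (hZ.1 0).aemeasurable h1
    have h4 : ∀ᵐ x ∂(vecLaw Z n), x i0 ≠ 0 := by
      refine (ae_map_iff (measurable_evalVec hZ n).aemeasurable ?_).2 h3
      exact (measurableSet_singleton (0 : ℝ)).compl.preimage (measurable_pi_apply i0)
    rw [hB] at h4
    exact ae_of_ae_map hBm.aemeasurable h4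
  have hjoint : Measurable fun q : (Fin n → ℝ) × ℝ => ENNReal.ofReal (Real.exp (-q.2)) *
      (ENNReal.ofReal (q.2 ^ n * Real.exp (-(q.2 ^ 2 - 1) * (∑ i, q.1 i ^ 2) / 2))
        * H fun i => q.2 * q.1 i) := by
    refine Measurable.mul (by fun_prop) (Measurable.mul (by fun_prop) (hHm.comp (by fun_prop)))
  have hswap : ∫⁻ ξ, (∫⁻ s in Set.Ioi 1, ENNReal.ofReal (Real.exp (-s)) *
      (ENNReal.ofReal (s ^ n * Real.exp (-(s ^ 2 - 1) * (∑ i, ξ i ^ 2) / 2))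
        * H fun i => s * ξ i)) ∂(stdPi (Fin n)) < ∞ := by
    rw [lintegral_lintegral_swap hjoint.aemeasurable]
    calc ∫⁻ s in Set.Ioi 1, ∫⁻ ξ, ENNReal.ofReal (Real.exp (-s)) *
          (ENNReal.ofReal (s ^ n * Real.exp (-(s ^ 2 - 1) * (∑ i, ξ i ^ 2) / 2))
            * H fun i => s * ξ i) ∂(stdPi (Fin n))
        = ∫⁻ s in Set.Ioi (1 : ℝ), ENNReal.ofReal (Real.exp (-s)) *
            ∫⁻ ξ, H ξ ∂(stdPi (Fin n)) := by
          refine setLIntegral_congr_fun measurableSet_Ioi fun s hs => ?_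
          have hs0 : (0 : ℝ) < s := lt_trans one_pos hs
          rw [lintegral_const_mul' _ _ ENNReal.ofReal_ne_top, ← lintegral_stdPi_eq_scale hs0 hHm]
      _ < ∞ := by
          rw [lintegral_mul_const _ (by fun_prop)]
          refine ENNReal.mul_lt_top ?_ hHfin
          exact (integrableOn_exp_neg_Ioi 1).lintegral_lt_top
  have hae : ∀ᵐ ξ ∂(stdPi (Fin n)), ∫⁻ s in Set.Ioi 1, ENNReal.ofReal (Real.exp (-s)) *
      (ENNReal.ofReal (s ^ n * Real.exp (-(s ^ 2 - 1) * (∑ i, ξ i ^ 2) / 2))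
        * H fun i => s * ξ i) < ∞ :=
    ae_lt_top hjoint.lintegral_prod_right' hswap.ne
  obtain ⟨ξ, hξ, hξ0⟩ := (hae.and hne).exists
  set a := (∑ i, ξ i ^ 2) / 2 with ha
  have ha0 : 0 ≤ a := by positivity
  refine exists_setLIntegral_lt_top_of_ray c hp hc (fun i => ∑ j, B i j * ξ j) hξ0
    (by positivity : 0 ≤ a + 1) (lt_of_le_of_lt ?_ hξ)
  refine setLIntegral_mono' measurableSet_Ioi fun s hs => ?_
  have h1 : H (fun i => s * ξ i)
      = h (vecAvg (evenPoly c p) fun i => s * ∑ j, B i j * ξ j) := by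
    have h2 : ∀ i, ∑ j, B i j * (s * ξ j) = s * ∑ j, B i j * ξ j := fun i => by
      rw [Finset.mul_sum]
      exact Finset.sum_congr rfl fun j _ => by ring
    simp only [hH, h2]
  rw [h1, ← mul_assoc, ← ENNReal.ofReal_mul (Real.exp_pos _).le]
  exact mul_le_mul_left (ENNReal.ofReal_le_ofReal (exp_weight_le n ha0 (le_of_lt hs) rfl)) _

lemma dW_nonneg (μ ν : Measure ℝ) : 0 ≤ dW μ ν := Real.iSup_nonneg fun _ => abs_nonneg _

/-- The supremum defining `dW μ ν` is infinite, hence `0` by convention, when `μ` has no first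
moment. -/
lemma dW_eq_zero_of_not_integrable {μ ν : Measure ℝ} [IsProbabilityMeasure μ]
    [IsProbabilityMeasure ν] (hμ : ¬ Integrable (fun x => x) μ) (hν : Integrable (fun x => x) ν) :
    dW μ ν = 0 := by
  refine Real.iSup_of_not_bddAbove fun ⟨B, hB⟩ => ?_
  have h1 : ∀ c : ℝ, |(∫ x, x ∂ν) + c| ≤ B := by
    intro c
    have hlip : LipschitzWith 1 fun x : ℝ => x + c := by
      refine LipschitzWith.of_dist_le_mul fun x y => ?_
      simp
    have h2 := hB ⟨⟨_, hlip⟩, rfl⟩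
    have h3 : ¬ Integrable (fun x : ℝ => x + c) μ := fun h => hμ <|
      (h.sub (integrable_const c)).congr (ae_of_all _ fun x => by simp)
    simp only [integral_undef h3, zero_sub, abs_neg] at h2
    rwa [integral_add hν (integrable_const c), integral_const, probReal_univ, one_smul] at h2
  have h2 := h1 (B + 1 - ∫ x, x ∂ν)
  rw [add_sub_cancel] at h2
  linarith [le_abs_self (B + 1)]

lemma LipschitzWith.integrable_of_integrable {α : Type*} {m : MeasurableSpace α} {μ : Measure α}
    [IsFiniteMeasure μ] {f : ℝ → ℝ} (hf : LipschitzWith 1 f) {X : α → ℝ} (hX : Integrable X μ) :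
    Integrable (fun ω => f (X ω)) μ := by
  refine (hX.abs.add (integrable_const |f 0|)).mono'
    (hf.continuous.comp_aestronglyMeasurable hX.1) (ae_of_all _ fun ω => ?_)
  have h1 := hf.dist_le_mul (X ω) 0
  rw [Real.dist_eq, Real.dist_eq, sub_zero, NNReal.coe_one, one_mul] at h1
  have h2 : |f (X ω)| ≤ |f (X ω) - f 0| + |f 0| := by
    simpa using abs_add_le (f (X ω) - f 0) (f 0)
  rw [Real.norm_eq_abs]
  exact h2.trans (add_le_add_left h1 _)

lemma abs_integral_sub_le_of_lipschitz {α : Type*} {m : MeasurableSpace α} {μ : Measure α}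
    [IsFiniteMeasure μ] {f : ℝ → ℝ} (hf : LipschitzWith 1 f) {X Y : α → ℝ} (hX : Integrable X μ)
    (hY : Integrable Y μ) :
    |(∫ ω, f (X ω) ∂μ) - ∫ ω, f (Y ω) ∂μ| ≤ ∫ ω, |X ω - Y ω| ∂μ := by
  rw [← integral_sub (hf.integrable_of_integrable hX) (hf.integrable_of_integrable hY)]
  refine abs_integral_le_integral_abs.trans (integral_mono_of_nonneg
    (ae_of_all _ fun ω => abs_nonneg _) (hX.sub hY).abs (ae_of_all _ fun ω => ?_))
  have h1 := hf.dist_le_mul (X ω) (Y ω)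
  rwa [Real.dist_eq, Real.dist_eq, NNReal.coe_one, one_mul] at h1

lemma bddAbove_dW {μ ν : Measure ℝ} [IsProbabilityMeasure μ]
    [IsProbabilityMeasure ν] (hμ : Integrable (fun x => x) μ) (hν : Integrable (fun x => x) ν) :
    BddAbove (Set.range fun f : {f : ℝ → ℝ // LipschitzWith 1 f} =>
      |(∫ x, f.1 x ∂μ) - ∫ x, f.1 x ∂ν|) := by
  refine ⟨(∫ x, |x| ∂μ) + ∫ x, |x| ∂ν, ?_⟩
  rintro _ ⟨⟨f, hf⟩, rfl⟩
  have key : ∀ ρ : Measure ℝ, IsProbabilityMeasure ρ → Integrable (fun x => x) ρ →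
      |(∫ x, f x ∂ρ) - f 0| ≤ ∫ x, |x| ∂ρ := by
    intro ρ _ hρ
    simpa using abs_integral_sub_le_of_lipschitz hf hρ (integrable_const 0)
  have h1 := key μ inferInstance hμ
  have h2 := key ν inferInstance hν
  rw [abs_sub_comm] at h2
  exact (abs_sub_le _ (f 0) _).trans (add_le_add h1 h2)

lemma dW_map_le_integral_add [IsProbabilityMeasure (ℙ : Measure Ω)] {F G : Ω → ℝ} {ν : Measure ℝ}
    [IsProbabilityMeasure ν] (hν : Integrable (fun x => x) ν) (hF : Integrable F)
    (hG : Integrable G) :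
    dW (Measure.map G (ℙ : Measure Ω)) ν
      ≤ (∫ ω, |G ω - F ω|) + dW (Measure.map F (ℙ : Measure Ω)) ν := by
  have : Nonempty {f : ℝ → ℝ // LipschitzWith 1 f} := ⟨⟨id, LipschitzWith.id⟩⟩
  have : IsProbabilityMeasure (Measure.map F (ℙ : Measure Ω)) :=
    Measure.isProbabilityMeasure_map hF.aemeasurable
  refine ciSup_le fun f => ?_
  have hFid : Integrable (fun x => x) (Measure.map F (ℙ : Measure Ω)) :=
    (integrable_map_measure aestronglyMeasurable_id hF.aemeasurable).2 hF
  have h1 := le_ciSup (bddAbove_dW hFid hν) f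
  have h2 := abs_integral_sub_le_of_lipschitz f.2 hG hF
  rw [← integral_map hG.aemeasurable f.2.continuous.aestronglyMeasurable,
    ← integral_map hF.aemeasurable f.2.continuous.aestronglyMeasurable] at h2
  exact (abs_sub_le _ _ _).trans (add_le_add h2 h1)

/-- Second order Taylor bound, uniform on compact intervals. -/
lemma exists_taylor_two_bound {g : ℝ → ℝ} (hg : ContDiff ℝ 2 g) (θ a b : ℝ) :
    ∃ K > 0, ∀ y ∈ Set.Icc a b, |g y - g θ - deriv g θ * (y - θ)| ≤ K * (y - θ) ^ 2 := by
  have hg1 : Differentiable ℝ g := hg.differentiable (by norm_num)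
  have hg2 : ContDiff ℝ 1 (deriv g) := hg.deriv'
  obtain ⟨K, hK⟩ := (isCompact_Icc (a := min a θ) (b := max b θ)).exists_bound_of_continuousOn
    (hg2.continuous_deriv le_rfl).continuousOn
  refine ⟨max K 1, lt_max_of_lt_right one_pos, fun y hy => ?_⟩
  have hK0 : 0 ≤ max K 1 := zero_le_one.trans (le_max_right _ _)
  set I := Set.uIcc θ y
  have hI : I ⊆ Set.Icc (min a θ) (max b θ) := by
    refine Set.uIcc_subset_Icc ⟨min_le_right _ _, le_max_right _ _⟩
      ⟨(min_le_left _ _).trans hy.1, hy.2.trans (le_max_left _ _)⟩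
  have hconv : Convex ℝ I := convex_uIcc θ y
  have hd : ∀ z ∈ I, |deriv g z - deriv g θ| ≤ max K 1 * |y - θ| := by
    intro z hz
    have h1 := hconv.norm_image_sub_le_of_norm_hasDerivWithin_le
      (fun w _ => ((hg2.differentiable one_ne_zero) w).hasDerivAt.hasDerivWithinAt)
      (fun w hw => (hK w (hI hw)).trans (le_max_left K 1)) Set.left_mem_uIcc hz
    refine h1.trans (mul_le_mul_of_nonneg_left ?_ hK0)
    exact Set.abs_sub_left_of_mem_uIcc hz
  have h2 := hconv.norm_image_sub_le_of_norm_hasDerivWithin_le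
    (f := fun z => g z - deriv g θ * z) (f' := fun z => deriv g z - deriv g θ)
    (fun w _ => by
      simpa using ((hg1 w).hasDerivAt.fun_sub
        ((hasDerivAt_id w).const_mul (deriv g θ))).hasDerivWithinAt)
    hd Set.left_mem_uIcc Set.right_mem_uIcc
  simp only [Real.norm_eq_abs] at h2
  rw [mul_assoc, ← pow_two, sq_abs] at h2
  refine le_trans (le_of_eq ?_) h2
  congr 1
  ring

lemma Qvar_eq_vecAvg (f : ℝ → ℝ) (Z : ℤ → Ω → ℝ) (n : ℕ) (ω : Ω) :
    Qvar f Z n ω = vecAvg f fun i : Fin n => Z (i : ℤ) ω := by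
  rw [Qvar, vecAvg, Finset.sum_range fun i : ℕ => f (Z (i : ℤ) ω)]

lemma memLp_Qvar [IsProbabilityMeasure (ℙ : Measure Ω)] {Z : ℤ → Ω → ℝ} {r : ℤ → ℝ}
    (hZ : IsCSG Z r) (c : ℕ → ℝ) (p n : ℕ) : MemLp (Qvar (evenPoly c p) Z n) 2 (ℙ : Measure Ω) := by
  unfold Qvar
  exact (memLp_finsetSum _ fun i _ => memLp_evenPoly_comp hZ c p _).const_mul _

lemma measurable_Qvar {f : ℝ → ℝ} (hf : Measurable f) {Z : ℤ → Ω → ℝ} {r : ℤ → ℝ}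
    (hZ : IsCSG Z r) (n : ℕ) : Measurable (Qvar f Z n) := by
  unfold Qvar
  have := hZ.1
  fun_prop

lemma integral_Qvar_sub_sq (f : ℝ → ℝ) (Z : ℤ → Ω → ℝ) {n : ℕ} (hn : 1 ≤ n) :
    ∫ ω, (Qvar f Z n ω - lamE f Z) ^ 2 = varU f Z n / n := by
  have hn0 : (0 : ℝ) < n := by exact_mod_cast hn
  simp only [varU, Ustat, mul_pow, Real.sq_sqrt hn0.le]
  rw [integral_const_mul, mul_div_cancel_left₀ _ hn0.ne']

/-- The second order Taylor remainder of `g` at `E f(Z_0)` is controlled by the square of the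
increment, except for a contribution of `g` itself beyond a threshold. -/
lemma exists_taylor_two_bound_of_le {g : ℝ → ℝ} (hg : ContDiff ℝ 2 g) (θ m A : ℝ)
    (hA : θ + 1 ≤ A) :
    ∃ K > 0, ∀ y, m ≤ y → |g y - g θ - deriv g θ * (y - θ)|
      ≤ K * (y - θ) ^ 2 + (Set.Ioi A).indicator (fun y => |g y|) y := by
  obtain ⟨K, hK0, hK⟩ := exists_taylor_two_bound hg θ m A
  refine ⟨K + (|g θ| + |deriv g θ|), by positivity, fun y hy => ?_⟩
  have h0 : 0 ≤ (|g θ| + |deriv g θ|) * (y - θ) ^ 2 := by positivity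
  rcases le_or_gt y A with hyA | hyA
  · rw [Set.indicator_of_notMem (by simpa using hyA)]
    linarith [hK y ⟨hy, hyA⟩]
  · rw [Set.indicator_of_mem (by simpa using hyA)]
    have h1 : 1 ≤ y - θ := by linarith
    have h2 : 1 ≤ (y - θ) ^ 2 := one_le_pow₀ h1
    have h3 : y - θ ≤ (y - θ) ^ 2 := le_self_pow₀ h1 two_ne_zero
    have h4 : |g y - g θ - deriv g θ * (y - θ)| ≤ |g y| + |g θ| + |deriv g θ| * (y - θ) := by
      refine (abs_sub _ _).trans ?_
      rw [abs_mul, abs_of_nonneg (by linarith : 0 ≤ y - θ)]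
      linarith [abs_sub (g y) (g θ)]
    have h5 : |g θ| ≤ |g θ| * (y - θ) ^ 2 := le_mul_of_one_le_right (abs_nonneg _) h2
    have h6 : |deriv g θ| * (y - θ) ≤ |deriv g θ| * (y - θ) ^ 2 := by gcongr
    have h7 : 0 ≤ K * (y - θ) ^ 2 := by positivity
    linarith

lemma exists_lintegral_remainder_le [IsProbabilityMeasure (ℙ : Measure Ω)] {Z : ℤ → Ω → ℝ}
    {r : ℤ → ℝ} (hZ : IsCSG Z r) (hsum : Summable fun j : ℤ => (r j) ^ 2) (c : ℕ → ℝ) {p : ℕ}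
    (hp : 1 ≤ p) (hc : 0 < c p) {g : ℝ → ℝ} (hg : ContDiff ℝ 2 g) {n0 : ℕ} (hn0 : 1 ≤ n0)
    (hint : Integrable fun ω => g (Qvar (evenPoly c p) Z n0 ω)) :
    ∃ n1 : ℕ, ∃ K > 0, ∀ n ≥ n1, 1 ≤ n →
      ∫⁻ ω, ENNReal.ofReal |g (Qvar (evenPoly c p) Z n ω) - g (lamE (evenPoly c p) Z)
        - deriv g (lamE (evenPoly c p) Z) * (Qvar (evenPoly c p) Z n ω - lamE (evenPoly c p) Z)|
      ≤ ENNReal.ofReal (K / n) := by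
  set f := evenPoly c p with hf
  set θ := lamE f Z with hθ
  have hfm : Measurable f := (continuous_evenPoly c p).measurable
  have hgm : Measurable g := hg.continuous.measurable
  set h : ℝ → ℝ≥0∞ := fun t => ENNReal.ofReal |g t| with hh
  have hhm : Measurable h := by fun_prop
  have hvec : ∀ (n : ℕ) (H : ℝ → ℝ≥0∞), Measurable H →
      ∫⁻ x, H (vecAvg f x) ∂(vecLaw Z n) = ∫⁻ ω, H (Qvar f Z n ω) := by
    intro n H hH
    rw [vecLaw, lintegral_map (f := fun x => H (vecAvg f x))
      (hH.comp (continuous_vecAvg (continuous_evenPoly c p) n).measurable)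
      (measurable_evalVec hZ n)]
    simp only [Qvar_eq_vecAvg]
  have hfin : ∫⁻ x, h (vecAvg f x) ∂(vecLaw Z n0) < ∞ := by
    rw [hvec n0 h hhm]
    exact hint.abs.lintegral_lt_top
  obtain ⟨c0, hc0, A1, hA1⟩ := exists_setLIntegral_lt_top hZ c hp hc hn0 hhm hfin
  obtain ⟨A2, hA2⟩ := exists_setLIntegral_vecAvg_le_div hZ hsum c hp hc
  set A := max (max A1 A2) (θ + 1) with hA
  obtain ⟨n1, C1, hC1, hn1⟩ := hA2 A ((le_max_right _ _).trans (le_max_left _ _)) c0 hc0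
  obtain ⟨C2, hC2, hlow⟩ := exists_le_evenPoly hc
  obtain ⟨K1, hK1, htay⟩ := exists_taylor_two_bound_of_le hg θ (-C2) A (le_max_right _ _)
  obtain ⟨V, hV0, hV⟩ := exists_varU_le hZ hsum c p
  set I := ∫⁻ t in Set.Ioi A, h t * ENNReal.ofReal (Real.exp (-c0 * t ^ (1 / (p : ℝ)))) with hI
  have hIfin : I < ∞ := lt_of_le_of_lt
    (lintegral_mono_set (Set.Ioi_subset_Ioi ((le_max_left _ _).trans (le_max_left _ _)))) hA1
  refine ⟨n1, K1 * V + C1 * I.toReal, by positivity, fun n hn hn' => ?_⟩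
  have hnpos : (0 : ℝ) < n := by exact_mod_cast hn'
  have hQm : Measurable (Qvar f Z n) := measurable_Qvar hfm hZ n
  have hlowQ : ∀ ω, -C2 ≤ Qvar f Z n ω := by
    intro ω
    rw [Qvar_eq_vecAvg]
    have h1 : vecAvg (fun y => -C2 + 0 * y) (fun i : Fin n => Z (i : ℤ) ω)
        ≤ vecAvg f fun i : Fin n => Z (i : ℤ) ω := vecAvg_le_of_le (fun y => ?_) _
    · rwa [vecAvg_affine hn', zero_mul, add_zero] at h1
    · have h2 : 0 ≤ c p / 2 * y ^ (2 * p) :=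
        mul_nonneg (by positivity) ((even_two_mul p).pow_nonneg _)
      linarith [hlow y]
  have hsq : ∫⁻ ω, ENNReal.ofReal (K1 * (Qvar f Z n ω - θ) ^ 2) ≤ ENNReal.ofReal (K1 * V / n) := by
    have hi : Integrable fun ω => K1 * (Qvar f Z n ω - θ) ^ 2 :=
      (((memLp_Qvar hZ c p n).sub (memLp_const θ)).integrable_sq).const_mul K1
    rw [← ofReal_integral_eq_lintegral_ofReal hi (ae_of_all _ fun ω => by positivity),
      integral_const_mul, integral_Qvar_sub_sq f Z hn', mul_div_assoc]
    refine ENNReal.ofReal_le_ofReal ?_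
    gcongr
    exact hV n
  have htail : ∫⁻ ω, (Set.Ioi A).indicator h (Qvar f Z n ω) ≤ ENNReal.ofReal (C1 * I.toReal / n) := by
    rw [← hvec n _ (hhm.indicator measurableSet_Ioi)]
    have h1 := hn1 n hn h hhm
    rw [← lintegral_indicator (measurableSet_lt measurable_const
      (continuous_vecAvg (continuous_evenPoly c p) n).measurable)] at h1
    refine h1.trans (le_of_eq ?_)
    rw [← hI, ← ENNReal.ofReal_toReal hIfin.ne, ← ENNReal.ofReal_mul (by positivity),
      ENNReal.toReal_ofReal ENNReal.toReal_nonneg]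
    congr 1
    ring
  calc _ ≤ ∫⁻ ω, (ENNReal.ofReal (K1 * (Qvar f Z n ω - θ) ^ 2)
        + (Set.Ioi A).indicator h (Qvar f Z n ω)) := by
        refine lintegral_mono fun ω => ?_
        have h1 := ENNReal.ofReal_le_ofReal (htay _ (hlowQ ω))
        rw [ENNReal.ofReal_add (by positivity)
          (Set.indicator_nonneg (fun _ _ => abs_nonneg _) _)] at h1
        refine h1.trans (add_le_add_right (le_of_eq ?_) _)
        by_cases hω : Qvar f Z n ω ∈ Set.Ioi A
        · rw [Set.indicator_of_mem hω, Set.indicator_of_mem hω]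
        · rw [Set.indicator_of_notMem hω, Set.indicator_of_notMem hω, ENNReal.ofReal_zero]
    _ = (∫⁻ ω, ENNReal.ofReal (K1 * (Qvar f Z n ω - θ) ^ 2))
        + ∫⁻ ω, (Set.Ioi A).indicator h (Qvar f Z n ω) := lintegral_add_left (by fun_prop) _
    _ ≤ ENNReal.ofReal (K1 * V / n) + ENNReal.ofReal (C1 * I.toReal / n) := add_le_add hsq htail
    _ = _ := by
        rw [← ENNReal.ofReal_add (by positivity) (by positivity), add_div]

lemma transfer_dW_bound [IsProbabilityMeasure (ℙ : Measure Ω)] {Z : ℤ → Ω → ℝ}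
    {r : ℤ → ℝ} (hZ : IsCSG Z r) (hsum : Summable fun j : ℤ => (r j) ^ 2) (c : ℕ → ℝ) {p : ℕ}
    (hp : 1 ≤ p) (hc : 0 < c p) (hvar : ∀ n : ℕ, 1 ≤ n → 0 < varU (evenPoly c p) Z n)
    {g : ℝ → ℝ} (hg : ContDiff ℝ 2 g) (hg' : deriv g (lamE (evenPoly c p) Z) ≠ 0) :
    ∃ C > (0 : ℝ), ∀ n : ℕ, 1 ≤ n →
      dW
          (Measure.map
            (fun ω =>
              Real.sqrt n * (g (Qvar (evenPoly c p) Z n ω) - g (lamE (evenPoly c p) Z)) /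
                (deriv g (lamE (evenPoly c p) Z) * Real.sqrt (varU (evenPoly c p) Z n)))
            (ℙ : Measure Ω))
          (gaussianReal 0 1) ≤
        C / Real.sqrt n +
          dW (Measure.map (Fstat (evenPoly c p) Z n) (ℙ : Measure Ω)) (gaussianReal 0 1) := by
  set f := evenPoly c p with hf
  set θ := lamE f Z with hθ
  set G : ℕ → Ω → ℝ := fun n ω =>
    √n * (g (Qvar f Z n ω) - g θ) / (deriv g θ * √(varU f Z n)) with hG
  set e : ℕ → ℝ := fun n => ∫ ω, |G n ω - Fstat f Z n ω| with he
  have he0 : ∀ n, 0 ≤ e n := fun n => integral_nonneg fun ω => abs_nonneg _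
  have hfm : Measurable f := (continuous_evenPoly c p).measurable
  have hgm : Measurable g := hg.continuous.measurable
  have hQm : ∀ n, Measurable (Qvar f Z n) := measurable_Qvar hfm hZ
  have hGm : ∀ n, Measurable (G n) := fun n => by
    have := hQm n
    fun_prop
  have hsn : ∀ n, 1 ≤ n → 0 < √(varU f Z n) := fun n hn => Real.sqrt_pos.2 (hvar n hn)
  have hN : Integrable (fun x : ℝ => x) (gaussianReal 0 1) :=
    (memLp_id_gaussianReal 1).integrable le_rfl
  have hFint : ∀ n, Integrable (Fstat f Z n) := fun n => by
    have h1 := ((memLp_Qvar hZ c p n).integrable (by norm_num))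
    exact ((h1.sub (integrable_const θ)).const_mul _).div_const _
  have hbase : ∀ n, 1 ≤ n → dW (Measure.map (G n) ℙ) (gaussianReal 0 1) = 0 ∨
      Integrable (fun ω => g (Qvar f Z n ω)) ∧ dW (Measure.map (G n) ℙ) (gaussianReal 0 1)
        ≤ e n + dW (Measure.map (Fstat f Z n) ℙ) (gaussianReal 0 1) := by
    intro n hn
    have hsn' := (hsn n hn).ne'
    have hn0 : √(n : ℝ) ≠ 0 := (Real.sqrt_pos.2 (by exact_mod_cast hn)).ne'
    by_cases hGi : Integrable (G n)
    · refine Or.inr ⟨?_, dW_map_le_integral_add hN (hFint n) hGi⟩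
      refine ((hGi.const_mul (deriv g θ * √(varU f Z n) / √n)).add
        (integrable_const (g θ))).congr (ae_of_all _ fun ω => ?_)
      simp only [hG, Pi.add_apply]
      field_simp
      ring
    · left
      have : IsProbabilityMeasure (Measure.map (G n) (ℙ : Measure Ω)) :=
        Measure.isProbabilityMeasure_map (hGm n).aemeasurable
      refine dW_eq_zero_of_not_integrable (fun h => hGi ?_) hN
      exact (integrable_map_measure aestronglyMeasurable_id (hGm n).aemeasurable).1 h
  by_cases hex : ∃ n0, 1 ≤ n0 ∧ Integrable fun ω => g (Qvar f Z n0 ω)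
  swap
  · refine ⟨1, one_pos, fun n hn => ?_⟩
    rcases hbase n hn with h | h
    · rw [h]
      exact add_nonneg (by positivity) (dW_nonneg _ _)
    · exact absurd ⟨n, hn, h.1⟩ hex
  obtain ⟨n0, hn0, hint⟩ := hex
  obtain ⟨n1, K, hK, hrem⟩ := exists_lintegral_remainder_le hZ hsum c hp hc hg hn0 hint
  have hlarge : ∀ n ≥ n1, 1 ≤ n → e n ≤ K / (|deriv g θ| * √(varU f Z 1)) / √n := by
    intro n hn hn'
    have hnpos : (0 : ℝ) < n := by exact_mod_cast hn'
    have hsq : 0 < √(n : ℝ) := Real.sqrt_pos.2 hnpos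
    have hs := hsn n hn'
    have hs1 := hsn 1 le_rfl
    have hmono : √(varU f Z 1) ≤ √(varU f Z n) := Real.sqrt_le_sqrt (varU_one_le hZ c p hn')
    have hd0 : 0 < |deriv g θ| := abs_pos.2 hg'
    have h1 : ∀ ω, |G n ω - Fstat f Z n ω| = √n / (|deriv g θ| * √(varU f Z n)) *
        |g (Qvar f Z n ω) - g θ - deriv g θ * (Qvar f Z n ω - θ)| := by
      intro ω
      have h3 : G n ω - Fstat f Z n ω = √n / (deriv g θ * √(varU f Z n)) *
          (g (Qvar f Z n ω) - g θ - deriv g θ * (Qvar f Z n ω - θ)) := by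
        have := hs.ne'
        simp only [hG, Fstat, Ustat, ← hθ]
        field_simp
      rw [h3, abs_mul, abs_div, abs_mul, abs_of_pos hsq, abs_of_pos hs]
    have h2 : ∫ ω, |g (Qvar f Z n ω) - g θ - deriv g θ * (Qvar f Z n ω - θ)| ≤ K / n := by
      rw [integral_eq_lintegral_of_nonneg_ae (ae_of_all _ fun ω => abs_nonneg _)
        (by have := hQm n
            fun_prop)]
      exact ENNReal.toReal_le_of_le_ofReal (by positivity) (hrem n hn hn')
    calc e n = √n / (|deriv g θ| * √(varU f Z n)) *
          ∫ ω, |g (Qvar f Z n ω) - g θ - deriv g θ * (Qvar f Z n ω - θ)| := by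
          rw [he, ← integral_const_mul]
          exact integral_congr_ae (ae_of_all _ h1)
      _ ≤ √n / (|deriv g θ| * √(varU f Z 1)) * (K / n) := by gcongr
      _ = K / (|deriv g θ| * √(varU f Z 1)) / √n := by
          have h3 : (n : ℝ) = √n * √n := (Real.mul_self_sqrt hnpos.le).symm
          rw [div_mul_div_comm, div_div, div_eq_div_iff (by positivity) (by positivity)]
          linear_combination (-(K * |deriv g θ| * √(varU f Z 1))) * h3
  have hsmall : 0 ≤ ∑ k ∈ Finset.range n1, e k * √k :=
    Finset.sum_nonneg fun k _ => mul_nonneg (he0 k) (Real.sqrt_nonneg _)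
  have hB : 0 < K / (|deriv g θ| * √(varU f Z 1)) :=
    div_pos hK (mul_pos (abs_pos.2 hg') (hsn 1 le_rfl))
  refine ⟨K / (|deriv g θ| * √(varU f Z 1)) + ∑ k ∈ Finset.range n1, e k * √k, by linarith,
    fun n hn => ?_⟩
  have hsq : 0 < √(n : ℝ) := Real.sqrt_pos.2 (by exact_mod_cast hn)
  have hen : e n ≤ (K / (|deriv g θ| * √(varU f Z 1)) + ∑ k ∈ Finset.range n1, e k * √k) / √n := by
    rcases le_or_gt n1 n with h | h
    · refine (hlarge n h hn).trans ?_
      gcongr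
      linarith
    · rw [le_div_iff₀ hsq]
      have := Finset.single_le_sum (f := fun k : ℕ => e k * √k)
        (fun k _ => mul_nonneg (he0 k) (Real.sqrt_nonneg _)) (Finset.mem_range.2 h)
      linarith
  rcases hbase n hn with h | h
  · rw [h]
    exact add_nonneg ((he0 n).trans hen) (dW_nonneg _ _)
  · exact h.2.trans (add_le_add_left hen _)

/-- transfer of Berry–Esséen-type Wasserstein bounds through a
smooth reparametrization `g`. -/
theorem statement_14
    {Ω : Type*} [MeasureSpace Ω] [IsProbabilityMeasure (ℙ : Measure Ω)]
    (Z : ℤ → Ω → ℝ) (r : ℤ → ℝ) (hZ : IsCSG Z r)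
    (q : ℕ) (hq : 0 < q) (hqe : q % 2 = 0)
    (d : ℕ → ℝ) (hd : d q = r 0 ^ (q / 2))
    (hsum : Summable fun j : ℤ => (r j) ^ 2)
    (hvar : ∀ n : ℕ, 1 ≤ n → 0 < varU (fpoly (r 0) d q) Z n)
    (g : ℝ → ℝ) (hg : ContDiff ℝ 2 g)
    (hg' : deriv g (lamE (fpoly (r 0) d q) Z) ≠ 0)
    (φ : ℕ → ℝ)
    (hφ : ∀ n : ℕ, 1 ≤ n →
      dW (Measure.map (Fstat (fpoly (r 0) d q) Z n) (ℙ : Measure Ω)) (gaussianReal 0 1) ≤ φ n)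
    (p' M : ℝ) (hp' : 1 < p') (hM : 0 < M)
    (hmom : ∀ n : ℕ, 1 ≤ n →
      (∫ ω,
          (sSup ((fun x => |deriv (deriv g) x|) ''
            Set.Icc (min (Qvar (fpoly (r 0) d q) Z n ω) (lamE (fpoly (r 0) d q) Z))
              (max (Qvar (fpoly (r 0) d q) Z n ω) (lamE (fpoly (r 0) d q) Z)))) ^ p') ≤ M) :
    ∃ C > (0 : ℝ), ∀ n : ℕ, 1 ≤ n →
      dW
          (Measure.map
            (fun ω =>
              Real.sqrt n * (g (Qvar (fpoly (r 0) d q) Z n ω) - g (lamE (fpoly (r 0) d q) Z)) /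
                (deriv g (lamE (fpoly (r 0) d q) Z) * Real.sqrt (varU (fpoly (r 0) d q) Z n)))
            (ℙ : Measure Ω))
          (gaussianReal 0 1) ≤
        C / Real.sqrt n + φ n := by
  clear hmom
  obtain ⟨p, rfl⟩ : ∃ p, q = 2 * p := ⟨q / 2, by omega⟩
  rw [Nat.mul_div_cancel_left p two_pos] at hd
  obtain ⟨c, hc, hfc⟩ := fpoly_eq_evenPoly hZ.2.2.2 hd
  rw [show fpoly (r 0) d (2 * p) = evenPoly c p from funext hfc] at hvar hg' hφ ⊢
  obtain ⟨C, hC, h⟩ := transfer_dW_bound hZ hsum c (by omega) (hc ▸ one_pos) hvar hg hg'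
  exact ⟨C, hC, fun n hn => (h n hn).trans (add_le_add_right (hφ n hn) _)⟩

end
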